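/- arXiv:1901.01993 — 6 statements merged into one kernel-verified Lean document; each statement's English description precedes it below -/
import Mathlib

section
/- Let M ≥ 5 be an integer and let a, b be integers with 1 ≤ a < b < M/2 and gcd(a,M) = gcd(b,M) = 1. Then for every integer n ≥ 1 and every integer m with 1 ≤ m ≤ Mn, the number of partitions of Mn into exactly m parts, each part congruent to a or M−a modulo M, is greater than or equal to the number of partitions of Mn into exactly m parts, each part congruent to b or M−b modulo M. (This is part (i) of the main theorem, equivalently Corollary 1(i): the coefficient c(m, Mn) in the two-variable expansion of 1/(sq^a, sq^{M−a}; q^M)_∞ − 1/(sq^b, sq^{M−b}; q^M)_∞ is nonnegative.) -/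
def pimT (j N : ℕ) : Finset (Multiset ℕ) :=
  (((Finset.range (N+1)).sym j).image (fun s : Sym ℕ j => (s.1 : Multiset ℕ))).filter (fun u => u.sum = N)

theorem mem_pimT (j N : ℕ) (u : Multiset ℕ) : u ∈ pimT j N ↔ u.card = j ∧ u.sum = N := by
  unfold pimT
  simp only [Finset.mem_filter, Finset.mem_image]
  constructor
  · rintro ⟨⟨s, hs, rfl⟩, h⟩
    exact ⟨s.2, h⟩
  · rintro ⟨h1, h2⟩
    refine ⟨⟨⟨u, h1⟩, ?_, rfl⟩, h2⟩
    refine Finset.mem_sym_iff.2 ?_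
    intro x hx
    have hx' : x ∈ u := hx
    have := Multiset.le_sum_of_mem hx'
    simp; omega

theorem pimT_zero_mem (j N : ℕ) :
    ((pimT (j+1) N).filter (fun u => 0 ∈ u)).card = (pimT j N).card := by
  refine Finset.card_bij' (fun u _ => u.erase 0) (fun u _ => 0 ::ₘ u) ?_ ?_ ?_ ?_
  · intro u hu
    simp only [Finset.mem_filter, mem_pimT] at hu ⊢
    obtain ⟨⟨h1, h2⟩, h3⟩ := hu
    have := Multiset.cons_erase h3
    constructor
    · rw [Multiset.card_erase_of_mem h3, h1]; rfl
    · rw [← this] at h2; simpa using h2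
  · intro u hu
    simp only [Finset.mem_filter, mem_pimT] at hu ⊢
    simp [hu.1, hu.2]
  · intro u hu
    simp only [Finset.mem_filter, mem_pimT] at hu
    exact Multiset.cons_erase hu.2
  · intro u hu
    simp

theorem pim_sum_succ (u : Multiset ℕ) : (u.map (· + 1)).sum = u.sum + u.card := by
  simp [Multiset.sum_map_add]

theorem pim_succ_pred (u : Multiset ℕ) (h : 0 ∉ u) : (u.map (· - 1)).map (· + 1) = u := by
  rw [Multiset.map_map]
  conv_rhs => rw [← Multiset.map_id u]
  refine Multiset.map_congr rfl ?_
  intro x hx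
  have : x ≠ 0 := fun h0 => h (h0 ▸ hx)
  simp; omega

theorem pimT_zero_not_mem (j N : ℕ) :
    ((pimT j (N+j)).filter (fun u => ¬ 0 ∈ u)).card = (pimT j N).card := by
  refine Finset.card_bij' (fun u _ => u.map (· - 1)) (fun u _ => u.map (· + 1)) ?_ ?_ ?_ ?_
  · intro u hu
    simp only [Finset.mem_filter, mem_pimT] at hu ⊢
    obtain ⟨⟨h1, h2⟩, h3⟩ := hu
    have h4 := pim_sum_succ (u.map (· - 1))
    rw [pim_succ_pred u h3, h2, Multiset.card_map, h1] at h4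
    refine ⟨by simpa using h1, by omega⟩
  · intro u hu
    simp only [Finset.mem_filter, mem_pimT] at hu ⊢
    rw [pim_sum_succ]
    simp [hu.1, hu.2]
  · intro u hu
    simp only [Finset.mem_filter, mem_pimT] at hu
    exact pim_succ_pred u hu.2
  · intro u hu
    simp [Multiset.map_map]

theorem pimT_zero_not_mem' (j N : ℕ) (hN : N < j) :
    ((pimT j N).filter (fun u => ¬ 0 ∈ u)).card = 0 := by
  rw [Finset.card_eq_zero, Finset.filter_eq_empty_iff]
  intro u hu h3
  rw [mem_pimT] at hu
  have h4 := pim_sum_succ (u.map (· - 1))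
  rw [pim_succ_pred u h3, hu.2, Multiset.card_map, hu.1] at h4
  omega

noncomputable def pimC (j : ℕ) : PowerSeries ℤ := PowerSeries.mk fun N => ((pimT j N).card : ℤ)

theorem pimC_succ (j : ℕ) : pimC (j+1) * (1 - PowerSeries.X^(j+1)) = pimC j := by
  ext N
  rw [mul_sub, mul_one, map_sub, PowerSeries.coeff_mul_X_pow']
  simp only [pimC, PowerSeries.coeff_mk]
  have h := Finset.card_filter_add_card_filter_not (s := pimT (j+1) N) (fun u => 0 ∈ u)
  rw [pimT_zero_mem] at h
  split_ifs with hN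
  · obtain ⟨K, rfl⟩ := Nat.exists_eq_add_of_le' hN
    rw [pimT_zero_not_mem] at h
    rw [Nat.add_sub_cancel]
    omega
  · rw [pimT_zero_not_mem' _ _ (by omega)] at h
    omega

theorem pimC_zero : pimC 0 = 1 := by
  ext N
  simp only [pimC, PowerSeries.coeff_mk, PowerSeries.coeff_one]
  split_ifs with h
  · subst h
    have : pimT 0 0 = {0} := by
      ext u; rw [mem_pimT]; simp
      rintro rfl; simp
    simp [this]
  · have : pimT 0 N = ∅ := by
      ext u; rw [mem_pimT]; simp
      rintro rfl; simp; omega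
    simp [this]

noncomputable def pimG (i : ℕ) : PowerSeries ℤ := PowerSeries.mk fun N => if i ∣ N then 1 else 0

theorem pimG_mul (i : ℕ) (hi : 0 < i) : pimG i * (1 - PowerSeries.X^i) = 1 := by
  ext N
  rw [mul_sub, mul_one, map_sub, PowerSeries.coeff_mul_X_pow']
  simp only [pimG, PowerSeries.coeff_mk, PowerSeries.coeff_one]
  by_cases hN : i ≤ N
  · have : N ≠ 0 := by omega
    have h2 : i ∣ N - i ↔ i ∣ N := Nat.dvd_sub_iff_left hN dvd_rfl
    simp [hN, h2, this, -Nat.dvd_sub_self_right]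
  · by_cases h0 : N = 0
    · subst h0; simp; omega
    · have : ¬ i ∣ N := fun h => hN (Nat.le_of_dvd (by omega) h)
      simp [hN, h0, this]

theorem pimC_eq (j : ℕ) : pimC j = ∏ i ∈ Finset.range j, pimG (i+1) := by
  induction j with
  | zero => simp [pimC_zero]
  | succ j ih =>
    rw [Finset.prod_range_succ, ← ih, ← pimC_succ j, mul_assoc, mul_comm (1 - _), pimG_mul _ (by omega), mul_one]

def pimNN (F : PowerSeries ℤ) : Prop := ∀ N, 0 ≤ PowerSeries.coeff N F

theorem pimNN_mul {F G} (hF : pimNN F) (hG : pimNN G) : pimNN (F * G) := by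
  intro N
  rw [PowerSeries.coeff_mul]
  exact Finset.sum_nonneg fun x _ => mul_nonneg (hF _) (hG _)

theorem pimNN_X (k : ℕ) : pimNN (PowerSeries.X ^ k) := by
  intro N
  rw [PowerSeries.coeff_X_pow]; split_ifs <;> simp

theorem pimNN_C (j : ℕ) : pimNN (pimC j) := by
  intro N; simp [pimC]

theorem pimNN_key (j s D : ℕ) (hs : 0 < s) (hD : 0 < D) (hsD : s ≠ D) (hsj : s ≤ j) (hDj : D ≤ j) :
    pimNN (pimC j * ((1 - PowerSeries.X^s) * (1 - PowerSeries.X^D))) := by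
  obtain ⟨s, rfl⟩ : ∃ s', s = s' + 1 := ⟨s-1, by omega⟩
  obtain ⟨D, rfl⟩ : ∃ s', D = s' + 1 := ⟨D-1, by omega⟩
  rw [pimC_eq, ← Finset.mul_prod_erase (Finset.range j) _ (a := s) (by simp; omega),
    ← Finset.mul_prod_erase ((Finset.range j).erase s) _ (a := D) (by simp; omega)]
  have h1 := pimG_mul (s+1) hs
  have h2 := pimG_mul (D+1) hD
  set P := ∏ x ∈ ((Finset.range j).erase s).erase D, pimG (x+1) with hP
  have : pimG (s+1) * (pimG (D+1) * P) * ((1 - PowerSeries.X^(s+1)) * (1 - PowerSeries.X^(D+1))) = P := by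
    linear_combination (pimG (D+1) * (1 - PowerSeries.X^(D+1))) * P * h1 + P * h2
  rw [this, hP]
  refine Finset.prod_induction _ pimNN (fun _ _ => pimNN_mul) ?_ ?_
  · simpa using pimNN_X 0
  · intro x _ N
    simp only [pimG, PowerSeries.coeff_mk]; split_ifs <;> simp

/-- contribution of `j` parts `≡ a`, `k` parts `≡ -a` -/
def pimF (M a n j k : ℕ) : ℕ :=
  ∑ q ∈ Finset.range (n+1) ×ˢ Finset.range (n+1),
    if M * (q.1 + q.2) + a * j + (M - a) * k = M * n then (pimT j q.1).card * (pimT k q.2).card else 0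

theorem pimF_eq (M a n j k e : ℕ) (hM : 0 < M) (h : a * j + (M - a) * k = M * e) :
    (pimF M a n j k : ℤ) = PowerSeries.coeff n (PowerSeries.X ^ e * (pimC j * pimC k)) := by
  rw [PowerSeries.coeff_X_pow_mul', pimF]
  have hc : ∀ N, (M * N + a * j + (M - a) * k = M * n ↔ N + e = n) := by
    intro N
    rw [add_assoc, h, ← mul_add]
    exact ⟨fun h => Nat.eq_of_mul_eq_mul_left hM h, fun h => by rw [h]⟩
  simp only [hc]
  rw [← Finset.sum_filter]
  split_ifs with he
  · rw [PowerSeries.coeff_mul]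
    push_cast
    refine Finset.sum_congr ?_ ?_
    · ext ⟨x, y⟩
      simp; omega
    · intro x _; simp [pimC]
  · rw [Finset.sum_eq_zero]; · rfl
    intro x hx
    simp at hx; omega

theorem pimF_zero (M a n j k : ℕ) (h2 : a ≤ M) (hc : Nat.Coprime a M) (hkj : k ≤ j) (h : ¬ M ∣ j - k) :
    pimF M a n j k = 0 ∧ pimF M a n k j = 0 := by
  obtain ⟨d, rfl⟩ := Nat.exists_eq_add_of_le hkj
  obtain ⟨a', rfl⟩ := Nat.exists_eq_add_of_le h2
  rw [Nat.add_sub_cancel_left] at h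
  have hc' : Nat.Coprime a' (a + a') := by
    have : Nat.Coprime a a' := by simpa using hc
    simpa using this.symm
  constructor
  · refine Finset.sum_eq_zero fun q _ => if_neg fun hq => h ?_
    rw [Nat.add_sub_cancel_left] at hq
    have : (a + a') ∣ a * d := by
      have h3 : (a+a') ∣ ((a+a') * (q.1+q.2+k)) + a * d := ⟨n, by rw [← hq]; ring⟩
      exact (Nat.dvd_add_right (dvd_mul_right _ _)).1 h3
    exact hc.symm.dvd_of_dvd_mul_left this
  · refine Finset.sum_eq_zero fun q _ => if_neg fun hq => h ?_
    rw [Nat.add_sub_cancel_left] at hq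
    have : (a + a') ∣ a' * d := by
      have h3 : (a+a') ∣ ((a+a') * (q.1+q.2+k)) + a' * d := ⟨n, by rw [← hq]; ring⟩
      exact (Nat.dvd_add_right (dvd_mul_right _ _)).1 h3
    exact hc'.symm.dvd_of_dvd_mul_left this

theorem pimF_ineq (M a b n j k : ℕ) (hab : a < b) (hb : 2 * b < M)
    (hbM : Nat.Coprime b M) (hkj : k ≤ j) :
    pimF M b n j k + pimF M b n k j ≤ pimF M a n j k + pimF M a n k j := by
  by_cases hd : M ∣ j - k
  · obtain ⟨t, ht⟩ := hd
    obtain rfl : j = k + M * t := by omega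
    have e1 : ∀ c, c ≤ M → c * (k + M * t) + (M - c) * k = M * (k + c * t) := by
      intro c hc
      zify [hc]; ring
    have e2 : ∀ c, c ≤ M → c * k + (M - c) * (k + M * t) = M * (k + (M - c) * t) := by
      intro c hc
      zify [hc]; ring
    zify
    rw [pimF_eq M b n _ _ _ (by omega) (e1 b (by omega)), pimF_eq M b n _ _ _ (by omega) (e2 b (by omega)),
      pimF_eq M a n _ _ _ (by omega) (e1 a (by omega)), pimF_eq M a n _ _ _ (by omega) (e2 a (by omega))]
    rcases Nat.eq_zero_or_pos t with rfl | htp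
    · simp
    · rw [← sub_nonneg, ← map_add, ← map_add, ← map_sub]
      obtain ⟨s, rfl⟩ := Nat.exists_eq_add_of_lt hab
      obtain ⟨D, hD⟩ : ∃ D, M = a + (a + s + 1) + D := Nat.exists_eq_add_of_le (by omega)
      have key := pimNN_mul (pimNN_mul (pimNN_X (k + a * t)) (pimNN_C k))
        (pimNN_key (k + M * t) ((s+1) * t) (D * t) (by positivity)
        (Nat.mul_pos (by omega) htp) (fun h => by
          have := Nat.eq_of_mul_eq_mul_right htp h
          omega)
        (by have := Nat.mul_le_mul_right t (show s + 1 ≤ M by omega); omega)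
        (by have := Nat.mul_le_mul_right t (show D ≤ M by omega); omega)) n
      convert key using 2
      have h1 : M - (a + s + 1) = a + D := by omega
      have h2 : M - a = a + (s + 1) + D := by omega
      rw [h1, h2]
      ring
  · rw [(pimF_zero M b n j k (by omega) hbM hkj hd).1, (pimF_zero M b n j k (by omega) hbM hkj hd).2]
    simp

theorem pimF_sum_ineq (M a b n m : ℕ) (hab : a < b) (hb : 2 * b < M)
    (hbM : Nat.Coprime b M) :
    ∑ x ∈ Finset.HasAntidiagonal.antidiagonal m, pimF M b n x.1 x.2 ≤ ∑ x ∈ Finset.HasAntidiagonal.antidiagonal m, pimF M a n x.1 x.2 := by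
  have hsw : ∀ c, ∑ x ∈ Finset.HasAntidiagonal.antidiagonal m, pimF M c n x.1 x.2
      = ∑ x ∈ Finset.HasAntidiagonal.antidiagonal m, pimF M c n x.2 x.1 := fun c =>
    (Finset.Nat.sum_antidiagonal_swap (f := fun x => pimF M c n x.1 x.2)).symm
  have : ∑ x ∈ Finset.HasAntidiagonal.antidiagonal m, (pimF M b n x.1 x.2 + pimF M b n x.2 x.1)
      ≤ ∑ x ∈ Finset.HasAntidiagonal.antidiagonal m, (pimF M a n x.1 x.2 + pimF M a n x.2 x.1) := by
    refine Finset.sum_le_sum fun x _ => ?_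
    rcases le_total x.2 x.1 with h | h
    · exact pimF_ineq M a b n _ _ hab hb hbM h
    · have := pimF_ineq M a b n _ _ hab hb hbM h
      omega
  rw [Finset.sum_add_distrib, Finset.sum_add_distrib, ← hsw, ← hsw] at this
  omega

def pimU (M a : ℕ) (p : Multiset ℕ) : Multiset ℕ := (p.filter (fun x => x % M = a)).map (· / M)
def pimV (M a : ℕ) (u : Multiset ℕ) : Multiset ℕ := u.map (fun x => M * x + a)

theorem pimV_sum (M a : ℕ) (u : Multiset ℕ) : (pimV M a u).sum = M * u.sum + a * u.card := by
  rw [pimV, Multiset.sum_map_add, Multiset.sum_map_mul_left]; simp [mul_comm]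

theorem pimV_U (M a : ℕ) (p : Multiset ℕ) : pimV M a (pimU M a p) = p.filter (fun x => x % M = a) := by
  unfold pimU pimV
  rw [Multiset.map_map]
  conv_rhs => rw [← Multiset.map_id (Multiset.filter _ _)]
  refine Multiset.map_congr rfl ?_
  intro x hx
  have := (Multiset.mem_filter.1 hx).2
  have h2 := Nat.div_add_mod x M
  simp only [Function.comp, id]; omega

theorem pimU_V (M a : ℕ) (u : Multiset ℕ) (h : a < M) : pimU M a (pimV M a u) = u := by
  unfold pimU pimV
  rw [Multiset.filter_eq_self.2, Multiset.map_map]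
  · conv_rhs => rw [← Multiset.map_id u]
    refine Multiset.map_congr rfl ?_
    intro x hx
    simp only [Function.comp, id]
    rw [Nat.mul_add_div (by omega), Nat.div_eq_of_lt h, add_zero]
  · intro x hx
    obtain ⟨y, _, rfl⟩ := Multiset.mem_map.1 hx
    rw [Nat.mul_add_mod, Nat.mod_eq_of_lt h]

theorem pimU_V' (M a b : ℕ) (u : Multiset ℕ) (h : a < M) (hab : a ≠ b) : pimU M b (pimV M a u) = 0 := by
  unfold pimU pimV
  rw [Multiset.filter_eq_nil.2, Multiset.map_zero]
  intro x hx
  obtain ⟨y, _, rfl⟩ := Multiset.mem_map.1 hx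
  rw [Nat.mul_add_mod, Nat.mod_eq_of_lt h]
  exact hab

theorem pimU_add (M a : ℕ) (u v : Multiset ℕ) : pimU M a (u + v) = pimU M a u + pimU M a v := by
  simp [pimU]

theorem pim_decomp (M a : ℕ) (p : Multiset ℕ) (h : 2 * a < M)
    (hp : ∀ x ∈ p, x % M = a ∨ x % M = M - a) :
    pimV M a (pimU M a p) + pimV M (M - a) (pimU M (M - a) p) = p := by
  rw [pimV_U, pimV_U]
  conv_rhs => rw [← Multiset.filter_add_not (fun x => x % M = a) p]
  congr 1
  refine Multiset.filter_congr ?_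
  intro x hx
  have := hp x hx
  omega

theorem pim_card (M a n m : ℕ) (ha : 1 ≤ a) (h : 2 * a < M) :
    (Finset.univ.filter (fun p : Nat.Partition (M * n) =>
        Multiset.card p.parts = m ∧
        ∀ x ∈ p.parts, x % M = a ∨ x % M = M - a)).card =
      ∑ x ∈ Finset.HasAntidiagonal.antidiagonal m, pimF M a n x.1 x.2 := by
  have hcd : ∀ c u, (pimV M c u).card = u.card := fun c u => by simp [pimV]
  -- facts
  have facts : ∀ p : Nat.Partition (M*n), (Multiset.card p.parts = m ∧
        ∀ x ∈ p.parts, x % M = a ∨ x % M = M - a) →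
      (pimU M a p.parts).card + (pimU M (M-a) p.parts).card = m ∧
      M * ((pimU M a p.parts).sum + (pimU M (M-a) p.parts).sum) + a * (pimU M a p.parts).card
        + (M - a) * (pimU M (M-a) p.parts).card = M * n := by
    rintro p ⟨h1, h2⟩
    have h3 := pim_decomp M a p.parts h h2
    constructor
    · rw [← h1]
      conv_rhs => rw [← h3]
      rw [Multiset.card_add, hcd, hcd]
    · have h4 := p.parts_sum
      rw [← h3, Multiset.sum_add, pimV_sum, pimV_sum] at h4
      linarith
  simp only [pimF]
  rw [← Finset.sum_product']
  rw [Finset.card_eq_sum_card_fiberwise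
    (t := Finset.HasAntidiagonal.antidiagonal m ×ˢ (Finset.range (n+1) ×ˢ Finset.range (n+1)))
    (f := fun p => (((pimU M a p.parts).card, (pimU M (M-a) p.parts).card),
      ((pimU M a p.parts).sum, (pimU M (M-a) p.parts).sum)))]
  · refine Finset.sum_congr rfl ?_
    rintro ⟨⟨j, k⟩, ⟨x, y⟩⟩ hmem
    simp only [Finset.mem_product, Finset.HasAntidiagonal.mem_antidiagonal, Finset.mem_range] at hmem
    dsimp only
    split_ifs with hq
    · rw [← Finset.card_product]
      refine Finset.card_bij (fun p _ => (pimU M a p.parts, pimU M (M-a) p.parts)) ?_ ?_ ?_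
      · intro p hp
        simp only [Finset.mem_filter, Finset.mem_univ, true_and, Prod.mk.injEq] at hp
        simp only [Finset.mem_product, mem_pimT]
        tauto
      · intro p hp p' hp' he
        simp only [Finset.mem_filter, Finset.mem_univ, true_and, Prod.mk.injEq] at hp hp' he
        apply Nat.Partition.ext
        rw [← pim_decomp M a p.parts h hp.1.2, ← pim_decomp M a p'.parts h hp'.1.2, he.1, he.2]
      · rintro ⟨u, v⟩ huv
        simp only [Finset.mem_product, mem_pimT] at huv
        obtain ⟨⟨hu1, hu2⟩, hv1, hv2⟩ := huv
        have e1 : pimU M a (pimV M a u + pimV M (M-a) v) = u := by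
          rw [pimU_add, pimU_V _ _ _ (by omega), pimU_V' _ _ _ _ (by omega) (by omega), add_zero]
        have e2 : pimU M (M-a) (pimV M a u + pimV M (M-a) v) = v := by
          rw [pimU_add, pimU_V _ (M-a) _ (by omega), pimU_V' _ _ _ _ (by omega) (by omega), zero_add]
        have hmod : ∀ z ∈ pimV M a u + pimV M (M-a) v, z % M = a ∨ z % M = M - a := by
          intro z hz
          rw [Multiset.mem_add] at hz
          rcases hz with hz | hz
          · obtain ⟨w, _, rfl⟩ := Multiset.mem_map.1 hz
            left; rw [Nat.mul_add_mod, Nat.mod_eq_of_lt (by omega)]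
          · obtain ⟨w, _, rfl⟩ := Multiset.mem_map.1 hz
            right; rw [Nat.mul_add_mod, Nat.mod_eq_of_lt (by omega)]
        refine ⟨⟨pimV M a u + pimV M (M-a) v, ?_, ?_⟩, ?_, ?_⟩
        · intro z hz
          have := hmod z hz
          rcases Nat.eq_zero_or_pos z with rfl | hz0
          · simp at this; omega
          · exact hz0
        · rw [Multiset.sum_add, pimV_sum, pimV_sum, hu1, hu2, hv1, hv2, ← hq]; ring
        · simp only [Finset.mem_filter, Finset.mem_univ, true_and, Prod.mk.injEq]
          rw [e1, e2, Multiset.card_add, hcd, hcd]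
          refine ⟨⟨by omega, hmod⟩, ⟨hu1, hv1⟩, hu2, hv2⟩
        · simp only [e1, e2]
    · rw [Finset.card_eq_zero, Finset.filter_eq_empty_iff]
      intro p hp he
      simp only [Finset.mem_filter, Finset.mem_univ, true_and, Prod.mk.injEq] at hp he
      have := (facts p hp).2
      rw [he.1.1, he.1.2, he.2.1, he.2.2] at this
      exact hq this
  · intro p hp
    simp only [Finset.coe_filter, Finset.mem_univ, true_and, Set.mem_ofPred_eq] at hp
    obtain ⟨f1, f2⟩ := facts p hp
    have : (pimU M a p.parts).sum + (pimU M (M-a) p.parts).sum ≤ n := by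
      have hM0 : 0 < M := by omega
      exact Nat.le_of_mul_le_mul_left
        ((Nat.le_add_right _ _).trans ((Nat.le_add_right _ _).trans f2.le)) hM0
    simp only [Finset.coe_product, Set.mem_prod, Finset.mem_coe, Finset.HasAntidiagonal.mem_antidiagonal, Finset.mem_range]
    exact ⟨f1, by omega, by omega⟩

theorem partition_inequality_mod_M (M a b : ℕ) (hM : 5 ≤ M)
    (ha : 1 ≤ a) (hab : a < b) (hb : 2 * b < M)
    (haM : Nat.Coprime a M) (hbM : Nat.Coprime b M)
    (n m : ℕ) (hn : 1 ≤ n) (hm1 : 1 ≤ m) (hm2 : m ≤ M * n) :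
    (Finset.univ.filter (fun p : Nat.Partition (M * n) =>
        Multiset.card p.parts = m ∧
        ∀ x ∈ p.parts, x % M = a ∨ x % M = M - a)).card ≥
    (Finset.univ.filter (fun p : Nat.Partition (M * n) =>
        Multiset.card p.parts = m ∧
        ∀ x ∈ p.parts, x % M = b ∨ x % M = M - b)).card := by
  rw [pim_card M a n m ha (by omega), pim_card M b n m (by omega) hb]
  exact pimF_sum_ineq M a b n m hab hb hbM
end

section
/- Let M ≥ 6 be an even integer and let a, b be integers with 1 ≤ a < b < M/2 and gcd(a,M) = gcd(b,M) = 1. Then for every integer n ≥ 0 and every integer m with 1 ≤ m ≤ Mn + M/2, the number of partitions of Mn + M/2 into exactly m parts, each part congruent to a or M−a modulo M, is greater than or equal to the number of partitions of Mn + M/2 into exactly m parts, each part congruent to b or M−b modulo M. (This is part (ii) of the main theorem, equivalently Corollary 1(ii).) -/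
lemma absG (F : ℕ → ℤ → ℤ) (h0 : ∀ r N, 0 ≤ F r N) (hneg : ∀ r N, N < 0 → F r N = 0)
    (hrec : ∀ r N, F (r+1) N = F r N + F (r+1) (N - (r+1))) (r : ℕ) :
    ∀ (k : ℕ) (N : ℤ), N < k → 0 ≤ F (r+1) N - F (r+1) (N-1) := by
  induction r with
  | zero =>
    intro k N _
    have := hrec 0 N
    have := h0 0 N
    norm_num at *
    linarith
  | succ r ih =>
    intro k
    induction k with
    | zero =>
      intro N hN
      rw [hneg _ N (by simpa using hN), hneg _ (N-1) (by push_cast at hN; linarith)]; simp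
    | succ k ihk =>
      intro N hN
      have h1 := hrec (r+1) N
      have h2 := hrec (r+1) (N-1)
      have h3 := ih (k+1) N hN
      have h4 := ihk (N - ((r+1:ℕ)+1)) (by push_cast at hN ⊢; linarith)
      have e : N - 1 - (((r+1:ℕ):ℤ)+1) = N - ((r+1:ℕ)+1) - 1 := by ring
      rw [e] at h2
      linarith

lemma absL (F : ℕ → ℤ → ℤ) (h0 : ∀ r N, 0 ≤ F r N) (hneg : ∀ r N, N < 0 → F r N = 0)
    (hrec : ∀ r N, F (r+1) N = F r N + F (r+1) (N - (r+1))) (L : ℕ) (hL : 1 ≤ L) (i : ℕ) :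
    ∀ (k : ℕ) (x : ℤ), x < k → 
      F (L+1+i) x - F (L+1+i) (x-1) ≤ F (L+1+i) (x+(L+1)) - F (L+1+i) (x+(L+1)-1) := by
  induction i with
  | zero =>
    intro k x _
    have h1 := hrec L (x+(L+1))
    have h2 := hrec L (x+(L+1)-1)
    have e1 : x + ((L:ℤ)+1) - (L+1) = x := by ring
    have e2 : x + ((L:ℤ)+1) - 1 - (L+1) = x - 1 := by ring
    rw [e1] at h1
    rw [e2] at h2
    obtain ⟨l, rfl⟩ : ∃ l, L = l + 1 := ⟨L-1, by omega⟩
    have h3 := absG F h0 hneg hrec l (x+((l+1:ℕ)+1)+1).toNat (x+((l+1:ℕ)+1)) (by omega)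
    simp only [add_zero]
    linarith
  | succ i ih =>
    intro k
    induction k with
    | zero =>
      intro x hx
      rw [hneg _ x (by simpa using hx), hneg _ (x-1) (by push_cast at hx; linarith)]
      have := absG F h0 hneg hrec (L+1+i) (x+(L+1)+1).toNat (x+(L+1)) (by omega)
      simpa [add_assoc] using this
    | succ k ihk =>
      intro x hx
      have h1 := hrec (L+1+i) x
      have h2 := hrec (L+1+i) (x-1)
      have h3 := hrec (L+1+i) (x+(L+1))
      have h4 := hrec (L+1+i) (x+(L+1)-1)
      have h5 := ih (k+1) x hx
      have h6 := ihk (x - ((L+1+i:ℕ)+1)) (by push_cast at hx ⊢; linarith)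
      have e2 : x - 1 - (((L+1+i:ℕ):ℤ)+1) = x - ((L+1+i:ℕ)+1) - 1 := by ring
      have e3 : x + ((L:ℤ)+1) - (((L+1+i:ℕ):ℤ)+1) = x - ((L+1+i:ℕ)+1) + (L+1) := by ring
      have e4 : x + ((L:ℤ)+1) - 1 - (((L+1+i:ℕ):ℤ)+1) = x - ((L+1+i:ℕ)+1) + (L+1) - 1 := by ring
      rw [e2] at h2; rw [e3] at h3; rw [e4] at h4
      have e : L + 1 + (i+1) = L + 1 + i + 1 := by ring
      rw [e] at h6 ⊢
      linarith

lemma absJ (F : ℕ → ℤ → ℤ) (h0 : ∀ r N, 0 ≤ F r N) (hneg : ∀ r N, N < 0 → F r N = 0)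
    (hrec : ∀ r N, F (r+1) N = F r N + F (r+1) (N - (r+1))) (L r : ℕ) (hL : 2 ≤ L) (hr : L ≤ r)
    (j : ℕ) (x : ℤ) : F r (x + L - j) + F r x ≤ F r (x+L) + F r (x-j) := by
  obtain ⟨l, rfl⟩ : ∃ l, L = l + 1 := ⟨L-1, by omega⟩
  obtain ⟨i, rfl⟩ : ∃ i, r = l + 1 + i := ⟨r-(l+1), by omega⟩
  induction j with
  | zero => simp
  | succ j ih =>
    have h := absL F h0 hneg hrec l (by omega) i (x-j+1).toNat (x-j) (by omega)
    push_cast at *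
    have e1 : x - (j:ℤ) + (l+1) = x + (l+1) - j := by ring
    have e2 : x + ((l:ℤ)+1) - (j+1) = x + (l+1) - j - 1 := by ring
    have e3 : x - ((j:ℤ)+1) = x - j - 1 := by ring
    rw [e1] at h; rw [e2, e3]
    linarith

def QS (r s : ℕ) (N : ℤ) : Set (Multiset ℕ × Multiset ℕ) :=
  {P | P.1.card = r ∧ P.2.card = s ∧ ((P.1.sum + P.2.sum : ℕ) : ℤ) = N}

lemma ms_fin (r N : ℕ) : {A : Multiset ℕ | A.card = r ∧ A.sum ≤ N}.Finite := by
  apply (Set.finite_Iic (r • Multiset.range (N+1))).subset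
  rintro A ⟨h1, h2⟩
  rw [Set.mem_Iic, Multiset.le_iff_count]
  intro x
  by_cases hx : x ∈ A
  · have : x ≤ A.sum := Multiset.le_sum_of_mem hx
    have h3 : x ∈ Multiset.range (N+1) := by rw [Multiset.mem_range]; omega
    have h4 := Multiset.one_le_count_iff_mem.2 h3
    have h5 := Multiset.count_le_card x A
    rw [Multiset.count_nsmul]
    nlinarith
  · rw [Multiset.count_eq_zero_of_notMem hx]; simp

lemma QS_fin (r s : ℕ) (N : ℤ) : (QS r s N).Finite := by
  apply ((ms_fin r N.toNat).prod (ms_fin s N.toNat)).subset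
  rintro ⟨A, B⟩ ⟨h1, h2, h3⟩
  simp only [Set.mem_prod, Set.mem_ofPred_eq] at *
  omega

lemma QS_symm (r s : ℕ) (N : ℤ) : (QS r s N).ncard = (QS s r N).ncard := by
  apply Set.ncard_congr (fun P _ => (P.2, P.1))
  · rintro ⟨A, B⟩ ⟨h1, h2, h3⟩
    refine ⟨h2, h1, ?_⟩
    simp only at *
    omega
  · rintro ⟨A, B⟩ ⟨C, D⟩ _ _ h
    simp at h ⊢; tauto
  · rintro ⟨A, B⟩ ⟨h1, h2, h3⟩
    refine ⟨(B, A), ⟨h2, h1, ?_⟩, rfl⟩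
    simp only at *
    omega

lemma QS_rec (r s : ℕ) (N : ℤ) :
    (QS (r+1) s N).ncard = (QS r s N).ncard + (QS (r+1) s (N - (r+1))).ncard := by
  have e : QS (r+1) s N = (fun P : Multiset ℕ × Multiset ℕ => ((0 ::ₘ P.1, P.2) : Multiset ℕ × Multiset ℕ)) '' QS r s N ∪
      (fun P : Multiset ℕ × Multiset ℕ => ((P.1.map Nat.succ, P.2) : Multiset ℕ × Multiset ℕ)) '' QS (r+1) s (N - (r+1)) := by
    ext ⟨A, B⟩
    constructor
    · rintro ⟨h1, h2, h3⟩
      simp only at h1 h2 h3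
      by_cases h : 0 ∈ A
      · left
        obtain ⟨C, rfl⟩ := Multiset.exists_cons_of_mem h
        refine ⟨(C, B), ⟨?_, h2, ?_⟩, rfl⟩
        · simpa using h1
        · simpa using h3
      · right
        have hA : (A.map Nat.pred).map Nat.succ = A := by
          rw [Multiset.map_map]
          conv_rhs => rw [← Multiset.map_id A]
          apply Multiset.map_congr rfl
          intro x hx
          have : x ≠ 0 := fun h' => h (h' ▸ hx)
          simp only [Function.comp, id]; exact Nat.succ_pred this
        have hs : ((A.map Nat.pred).map Nat.succ).sum = (A.map Nat.pred).sum + (r+1) := by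
          simp [Nat.succ_eq_add_one, Multiset.sum_map_add, h1, add_comm]
        refine ⟨(A.map Nat.pred, B), ⟨?_, h2, ?_⟩, ?_⟩
        · simpa using h1
        · rw [hA] at hs
          simp only
          omega
        · simp only [hA]
    · rintro (⟨⟨C, D⟩, ⟨h1, h2, h3⟩, h4⟩ | ⟨⟨C, D⟩, ⟨h1, h2, h3⟩, h4⟩)
      · simp only [Prod.mk.injEq] at h1 h2 h3 h4
        obtain ⟨rfl, rfl⟩ := h4
        exact ⟨by simp [h1], h2, by simpa using h3⟩
      · simp only [Prod.mk.injEq] at h1 h2 h3 h4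
        obtain ⟨rfl, rfl⟩ := h4
        have hs : (C.map Nat.succ).sum = C.sum + (r+1) := by
          simp [Nat.succ_eq_add_one, Multiset.sum_map_add, h1, add_comm]
        refine ⟨by simp [h1], h2, ?_⟩
        simp only [hs]
        omega
  rw [e, Set.ncard_union_eq _ ((QS_fin _ _ _).image _) ((QS_fin _ _ _).image _),
    Set.ncard_image_of_injective, Set.ncard_image_of_injective]
  · rintro ⟨A, B⟩ ⟨C, D⟩ h
    simp only [Prod.mk.injEq] at h ⊢
    exact ⟨Multiset.map_injective Nat.succ_injective h.1, h.2⟩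
  · rintro ⟨A, B⟩ ⟨C, D⟩ h
    simp only [Prod.mk.injEq, Multiset.cons_inj_right] at h ⊢
    exact h
  · rw [Set.disjoint_left]
    rintro _ ⟨⟨A, B⟩, _, rfl⟩ ⟨⟨C, D⟩, _, h⟩
    simp only [Prod.mk.injEq] at h
    have : 0 ∈ C.map Nat.succ := by rw [h.1]; simp
    simp at this

lemma QS_neg (r s : ℕ) (N : ℤ) (h : N < 0) : (QS r s N).ncard = 0 := by
  have : QS r s N = ∅ := by
    ext ⟨A, B⟩
    simp only [QS, Set.mem_ofPred_eq, Set.mem_empty_iff_false, iff_false]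
    omega
  rw [this]; simp

lemma QS_key (L r s : ℕ) (hL : 2 ≤ L) (hr : L ≤ r) (j : ℕ) (x : ℤ) :
    (QS r s (x + L - j)).ncard + (QS r s x).ncard ≤
      (QS r s (x+L)).ncard + (QS r s (x-j)).ncard := by
  have := absJ (fun r N => ((QS r s N).ncard : ℤ)) (by intros; positivity)
    (by intro r N h; simp [QS_neg r s N h])
    (by intro r N; simp only [QS_rec r s N]; push_cast; rfl) L r hL hr j x
  exact_mod_cast this

def CS (M b T r s : ℕ) : Set (Multiset ℕ × Multiset ℕ) :=
  {P | P.1.card = r ∧ P.2.card = s ∧ M * (P.1.sum + P.2.sum) + r * b + s * (M - b) = T}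

lemma CS_eq (M b T r s : ℕ) (hM : 0 < M) (hb : b ≤ M) (N : ℤ)
    (h : M * N + r * b + s * (M - b) = T) : CS M b T r s = QS r s N := by
  ext ⟨A, B⟩
  simp only [CS, QS, Set.mem_ofPred_eq]
  refine and_congr_right fun _ => and_congr_right fun _ => ?_
  rw [← Nat.cast_inj (R := ℤ), ← h]
  push_cast [Nat.cast_sub hb]
  have hM' : (M:ℤ) ≠ 0 := by positivity
  constructor
  · intro h
    apply mul_left_cancel₀ hM'
    linarith
  · intro h
    rw [h]

lemma msum (M c : ℕ) (A : Multiset ℕ) :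
    (A.map (fun k => M * k + c)).sum = M * A.sum + A.card * c := by
  rw [Multiset.sum_map_add, Multiset.sum_map_mul_left]; simp

lemma mdiv (M c : ℕ) (A : Multiset ℕ) (h : ∀ x ∈ A, x % M = c) :
    (A.map (· / M)).map (fun k => M * k + c) = A := by
  rw [Multiset.map_map]
  conv_rhs => rw [← Multiset.map_id A]
  apply Multiset.map_congr rfl
  intro x hx
  simp only [Function.comp, id]
  rw [← h x hx]
  exact Nat.div_add_mod x M

lemma fiber_card (M b T m r s : ℕ) (hb0 : 1 ≤ b) (hb : 2 * b < M) (hrs : r + s = m) :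
    ((Finset.univ.filter (fun p : Nat.Partition T =>
        Multiset.card p.parts = m ∧
        ∀ x ∈ p.parts, x % M = b ∨ x % M = M - b)).filter
      (fun p => ((p.parts.filter (fun x => x % M = b)).card,
        (p.parts.filter (fun x => ¬ x % M = b)).card) = (r, s))).card = (CS M b T r s).ncard := by
  rw [← Set.ncard_coe_finset]
  apply Set.ncard_congr (fun p _ => ((p.parts.filter (fun x => x % M = b)).map (· / M),
        (p.parts.filter (fun x => ¬ x % M = b)).map (· / M)))
  · intro p hp
    simp only [Finset.coe_filter, Finset.mem_filter, Finset.mem_univ, true_and, Set.mem_ofPred_eq,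
      Prod.mk.injEq] at hp
    obtain ⟨⟨h1, h2⟩, h3, h4⟩ := hp
    refine ⟨by simpa using h3, by simpa using h4, ?_⟩
    have e1 := mdiv M b (p.parts.filter (fun x => x % M = b)) (by simp)
    have e2 := mdiv M (M-b) (p.parts.filter (fun x => ¬ x % M = b)) (by
      intro x hx
      rw [Multiset.mem_filter] at hx
      exact (h2 x hx.1).resolve_left hx.2)
    have e3 := Multiset.filter_add_not (fun x => x % M = b) p.parts
    have e4 := p.parts_sum
    rw [← e3, Multiset.sum_add, ← e1, ← e2, msum, msum] at e4
    simp only [Multiset.card_map, h3, h4] at e4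
    simp only
    linarith
  · intro p q hp hq h
    simp only [Finset.coe_filter, Finset.mem_filter, Finset.mem_univ, true_and, Set.mem_ofPred_eq,
      Prod.mk.injEq] at hp hq h
    have e1 := mdiv M b (p.parts.filter (fun x => x % M = b)) (by simp)
    have e2 := mdiv M (M-b) (p.parts.filter (fun x => ¬ x % M = b)) (by
      intro x hx
      rw [Multiset.mem_filter] at hx
      exact (hp.1.2 x hx.1).resolve_left hx.2)
    have e3 := Multiset.filter_add_not (fun x => x % M = b) p.parts
    have f1 := mdiv M b (q.parts.filter (fun x => x % M = b)) (by simp)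
    have f2 := mdiv M (M-b) (q.parts.filter (fun x => ¬ x % M = b)) (by
      intro x hx
      rw [Multiset.mem_filter] at hx
      exact (hq.1.2 x hx.1).resolve_left hx.2)
    have f3 := Multiset.filter_add_not (fun x => x % M = b) q.parts
    apply Nat.Partition.ext
    rw [← e3, ← f3, ← e1, ← e2, ← f1, ← f2, h.1, h.2]
  · rintro ⟨A, B⟩ ⟨h1, h2, h3⟩
    simp only at h1 h2 h3
    have hbm : ∀ k, (M * k + b) % M = b := fun k => by
      rw [Nat.mul_add_mod, Nat.mod_eq_of_lt (by omega)]
    have hbm' : ∀ k, (M * k + (M - b)) % M = M - b := fun k => by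
      rw [Nat.mul_add_mod, Nat.mod_eq_of_lt (by omega)]
    have hne : M - b ≠ b := by omega
    have g1 : (A.map (fun k => M * k + b) + B.map (fun k => M * k + (M-b))).filter
        (fun x => x % M = b) = A.map (fun k => M * k + b) := by
      rw [Multiset.filter_add, Multiset.filter_eq_self.2, Multiset.filter_eq_nil.2, add_zero]
      · intro x hx
        obtain ⟨k, _, rfl⟩ := Multiset.mem_map.1 hx
        rw [hbm']; exact hne
      · intro x hx
        obtain ⟨k, _, rfl⟩ := Multiset.mem_map.1 hx
        exact hbm k
    have g2 : (A.map (fun k => M * k + b) + B.map (fun k => M * k + (M-b))).filter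
        (fun x => ¬ x % M = b) = B.map (fun k => M * k + (M-b)) := by
      rw [Multiset.filter_add, Multiset.filter_eq_nil.2, Multiset.filter_eq_self.2, zero_add]
      · intro x hx
        obtain ⟨k, _, rfl⟩ := Multiset.mem_map.1 hx
        rw [hbm']; exact hne
      · intro x hx
        obtain ⟨k, _, rfl⟩ := Multiset.mem_map.1 hx
        simpa using hbm k
    have hd : ∀ c, c < M → ∀ C : Multiset ℕ, (C.map (fun k => M * k + c)).map (· / M) = C := by
      intro c hc C
      rw [Multiset.map_map]
      conv_rhs => rw [← Multiset.map_id C]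
      apply Multiset.map_congr rfl
      intro x hx
      simp only [Function.comp, id]
      rw [Nat.mul_add_div (by omega), Nat.div_eq_of_lt hc, add_zero]
    refine ⟨⟨A.map (fun k => M * k + b) + B.map (fun k => M * k + (M-b)), ?_, ?_⟩, ?_, ?_⟩
    · intro x hx
      rw [Multiset.mem_add, Multiset.mem_map, Multiset.mem_map] at hx
      rcases hx with ⟨k, _, rfl⟩ | ⟨k, _, rfl⟩ <;> omega
    · rw [Multiset.sum_add, msum, msum, h1, h2]; linarith
    · simp only [Finset.coe_filter, Finset.mem_filter, Finset.mem_univ, true_and,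
        Set.mem_ofPred_eq, g1, g2]
      refine ⟨⟨by simp [h1, h2, hrs], ?_⟩, by simp [h1, h2]⟩
      intro x hx
      rw [Multiset.mem_add, Multiset.mem_map, Multiset.mem_map] at hx
      rcases hx with ⟨k, _, rfl⟩ | ⟨k, _, rfl⟩
      · left; exact hbm k
      · right; exact hbm' k
    · simp only [g1, g2]
      rw [hd b (by omega), hd (M-b) (by omega)]

lemma total_card (M b T m : ℕ) (hb0 : 1 ≤ b) (hb : 2 * b < M) :
    (Finset.univ.filter (fun p : Nat.Partition T =>
        Multiset.card p.parts = m ∧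
        ∀ x ∈ p.parts, x % M = b ∨ x % M = M - b)).card =
      ∑ P ∈ Finset.HasAntidiagonal.antidiagonal m, (CS M b T P.1 P.2).ncard := by
  rw [Finset.card_eq_sum_card_fiberwise (t := Finset.HasAntidiagonal.antidiagonal m)
    (f := fun p : Nat.Partition T => ((p.parts.filter (fun x => x % M = b)).card,
        (p.parts.filter (fun x => ¬ x % M = b)).card))]
  · apply Finset.sum_congr rfl
    rintro ⟨r, s⟩ h
    exact fiber_card M b T m r s hb0 hb (by simpa using h)
  · intro p hp
    simp only [Finset.coe_filter, Finset.mem_univ, true_and, Set.mem_ofPred_eq] at hp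
    simp only [Finset.mem_coe, Finset.HasAntidiagonal.mem_antidiagonal]
    rw [← Multiset.card_add, Multiset.filter_add_not, hp.1]

lemma CS_zero (h b n r s : ℕ) (hh : 0 < h) (hb : b ≤ 2 * h) (hc : Nat.Coprime b (2*h))
    (hne : (CS (2*h) b (2*h*n+h) r s).ncard ≠ 0) :
    ∃ t : ℤ, Odd t ∧ (r:ℤ) - s = h * t := by
  obtain ⟨⟨A, B⟩, h1, h2, h3⟩ := Set.nonempty_of_ncard_ne_zero hne
  simp only at h3
  have h4 : (2 * h : ℤ) * (A.sum + B.sum) + r * b + s * (2 * h - b) = 2 * h * n + h := by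
    have := congrArg (Nat.cast : ℕ → ℤ) h3
    rw [Nat.cast_add, Nat.cast_add, Nat.cast_mul, Nat.cast_mul, Nat.cast_mul, Nat.cast_mul, Nat.cast_add, Nat.cast_sub hb, Nat.cast_add, Nat.cast_mul, Nat.cast_mul, Nat.cast_mul] at this
    exact this
  have hc' : IsCoprime (h:ℤ) (b:ℤ) :=
    Nat.isCoprime_iff_coprime.2 (Nat.Coprime.symm (Nat.Coprime.coprime_mul_left_right hc))
  have hd : (h:ℤ) ∣ ((r:ℤ) - s) * b :=
    ⟨2 * n + 1 - 2 * (A.sum + B.sum) - 2 * s, by linarith⟩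
  obtain ⟨t, ht⟩ := hc'.dvd_of_dvd_mul_right hd
  refine ⟨t, ?_, ht⟩
  have : (h:ℤ) * (t * b) = h * (2 * (n - (A.sum + B.sum) - s) + 1) := by
    rw [← mul_assoc, ← ht]; linarith
  have := mul_left_cancel₀ (by positivity) this
  have ho : Odd (t * (b:ℤ)) := ⟨_, this⟩
  exact (Int.odd_mul.1 ho).1

lemma pair_ineq (h a b n r s : ℕ) (ha : 1 ≤ a) (hab : a < b) (hb : b < h)
    (haM : Nat.Coprime a (2*h)) (hbM : Nat.Coprime b (2*h)) (hrs : s ≤ r) :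
    (CS (2*h) b (2*h*n+h) r s).ncard + (CS (2*h) b (2*h*n+h) s r).ncard ≤
    (CS (2*h) a (2*h*n+h) r s).ncard + (CS (2*h) a (2*h*n+h) s r).ncard := by
  by_cases ht : ∃ t : ℤ, Odd t ∧ (r:ℤ) - s = h * t
  · obtain ⟨t, hto, ht⟩ := ht
    have hoa : Odd a := Nat.Coprime.odd_of_right (Nat.Coprime.coprime_mul_right_right haM)
    have hob : Odd b := Nat.Coprime.odd_of_right (Nat.Coprime.coprime_mul_right_right hbM)
    have hh : (0:ℤ) < h := by omega
    have ht0 : 0 < t := by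
      have h1 : 0 ≤ t := by
        by_contra! hneg
        nlinarith
      rcases hto with ⟨k, rfl⟩
      omega
    obtain ⟨u, hu⟩ := hto.mul (Int.odd_coe_nat b |>.2 hob)
    obtain ⟨v, hv⟩ := hto.mul (Int.odd_coe_nat a |>.2 hoa)
    obtain ⟨a', rfl⟩ := hoa
    obtain ⟨b', rfl⟩ := hob
    have hvu : 0 ≤ u - v := by
      push_cast at hu hv
      have : 2 * (u - v) = t * (2 * (b' - a')) := by linarith
      have h2 : (0:ℤ) ≤ b' - a' := by omega
      have := mul_nonneg ht0.le h2
      linarith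
    obtain ⟨j, hj⟩ := Int.eq_ofNat_of_zero_le hvu
    have hLe : (r:ℤ) - s - u - v - 1 = t * (h - (a' + b' + 1)) := by
      push_cast at hu hv
      linarith
    have hL2 : 2 ≤ (r:ℤ) - s - u - v - 1 := by
      rw [hLe]
      have : (2:ℤ) ≤ h - (a' + b' + 1) := by omega
      nlinarith
    obtain ⟨L, hL⟩ := Int.eq_ofNat_of_zero_le (by linarith : 0 ≤ (r:ℤ) - s - u - v - 1)
    have hLr : (L:ℤ) ≤ r := by
      have h1 : (L:ℤ) = t * h - t * (a'+b'+1) := by linarith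
      have : 0 ≤ t * ((a':ℤ)+b'+1) := by positivity
      have : (0:ℤ) ≤ s := by positivity
      linarith
    have key := QS_key L r s (by omega) (by omega) j (n - r + u + 1)
    have hb1 : CS (2*h) (2*b'+1) (2*h*n+h) r s = QS r s ((n - r + u + 1) + L - j) := by
      apply CS_eq _ _ _ _ _ (by omega) (by omega)
      rw [← hL, ← hj]
      push_cast at hu ⊢
      linear_combination (2 * (b':ℤ) + 1) * ht + (h:ℤ) * hu
    have hb2 : CS (2*h) (2*b'+1) (2*h*n+h) s r = QS s r (n - r + u + 1) := by
      apply CS_eq _ _ _ _ _ (by omega) (by omega)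
      push_cast at hu ⊢
      linear_combination -(2 * (b':ℤ) + 1) * ht - (h:ℤ) * hu
    have ha1 : CS (2*h) (2*a'+1) (2*h*n+h) r s = QS r s ((n - r + u + 1) + L) := by
      apply CS_eq _ _ _ _ _ (by omega) (by omega)
      rw [← hL]
      push_cast at hv ⊢
      linear_combination (2 * (a':ℤ) + 1) * ht + (h:ℤ) * hv
    have ha2 : CS (2*h) (2*a'+1) (2*h*n+h) s r = QS s r ((n - r + u + 1) - j) := by
      apply CS_eq _ _ _ _ _ (by omega) (by omega)
      rw [← hj]
      push_cast at hv ⊢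
      linear_combination -(2 * (a':ℤ) + 1) * ht - (h:ℤ) * hv
    rw [hb1, hb2, ha1, ha2, QS_symm s r, QS_symm s r]
    exact key
  · have z1 : (CS (2*h) b (2*h*n+h) r s).ncard = 0 := by
      by_contra hne
      exact ht (CS_zero h b n r s (by omega) (by omega) hbM hne)
    have z2 : (CS (2*h) b (2*h*n+h) s r).ncard = 0 := by
      by_contra hne
      obtain ⟨t, h1, h2⟩ := CS_zero h b n s r (by omega) (by omega) hbM hne
      exact ht ⟨-t, h1.neg, by linarith⟩
    rw [z1, z2]; simp


theorem partition_inequality_mod_M_even (M a b : ℕ) (hM : 6 ≤ M) (hMe : Even M)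
    (ha : 1 ≤ a) (hab : a < b) (hb : 2 * b < M)
    (haM : Nat.Coprime a M) (hbM : Nat.Coprime b M)
    (n m : ℕ) (hm1 : 1 ≤ m) (hm2 : m ≤ M * n + M / 2) :
    (Finset.univ.filter (fun p : Nat.Partition (M * n + M / 2) =>
        Multiset.card p.parts = m ∧
        ∀ x ∈ p.parts, x % M = a ∨ x % M = M - a)).card ≥
    (Finset.univ.filter (fun p : Nat.Partition (M * n + M / 2) =>
        Multiset.card p.parts = m ∧
        ∀ x ∈ p.parts, x % M = b ∨ x % M = M - b)).card := by
  obtain ⟨h, rfl⟩ := hMe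
  have e : h + h = 2 * h := by ring
  have e2 : (h + h) / 2 = h := by omega
  rw [e2]
  rw [e] at hb haM hbM ⊢
  rw [ge_iff_le, total_card _ _ _ _ (by omega) hb, total_card _ _ _ _ ha (by omega)]
  have sw : ∀ f : ℕ × ℕ → ℕ, 2 * ∑ P ∈ Finset.HasAntidiagonal.antidiagonal m, f P =
      ∑ P ∈ Finset.HasAntidiagonal.antidiagonal m, (f P + f P.swap) := by
    intro f
    rw [Finset.sum_add_distrib, Finset.Nat.sum_antidiagonal_swap, two_mul]
  apply Nat.le_of_mul_le_mul_left _ (by norm_num : 0 < 2)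
  rw [sw, sw]
  apply Finset.sum_le_sum
  rintro ⟨r, s⟩ _
  simp only [Prod.swap]
  rcases le_total s r with hrs | hrs
  · exact pair_ineq h a b n r s ha hab (by omega) haM hbM hrs
  · have := pair_ineq h a b n s r ha hab (by omega) haM hbM hrs
    omega
end

section
/- Let M ≥ 5 be an integer and let a, b be integers with 1 ≤ a < b < M/2 and gcd(a,M) = gcd(b,M) = 1. Then for every integer n ≥ 1 and every integer m with 1 ≤ m ≤ Mn, the number of partitions of Mn into exactly m DISTINCT parts, each part congruent to a or M−a modulo M, is greater than or equal to the number of partitions of Mn into exactly m distinct parts, each part congruent to b or M−b modulo M. (This is part (i) of the second main theorem, equivalently Corollary 2(i): the coefficient d(m, Mn) in the expansion of (−sq^a, −sq^{M−a}; q^M)_∞ − (−sq^b, −sq^{M−b}; q^M)_∞ is nonnegative.) -/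
open Finset PowerSeries

/-- finite sets of naturals with given card and sum -/
def TT (i N : ℕ) : Finset (Finset ℕ) :=
  (powersetCard i (range (N+1))).filter (fun S => ∑ x ∈ S, x = N)

lemma mem_TT (i N : ℕ) (S : Finset ℕ) : S ∈ TT i N ↔ S.card = i ∧ ∑ x ∈ S, x = N := by
  unfold TT
  rw [mem_filter, mem_powersetCard]
  constructor
  · rintro ⟨⟨_, h⟩, h'⟩; exact ⟨h, h'⟩
  · rintro ⟨h, h'⟩
    refine ⟨⟨fun x hx => ?_, h⟩, h'⟩
    have := single_le_sum (f := fun x : ℕ => x) (fun _ _ => Nat.zero_le _) hx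
    rw [mem_range]
    omega

noncomputable def DD (i : ℕ) : PowerSeries ℤ := PowerSeries.mk (fun N => ((TT i N).card : ℤ))

lemma card_zero_notMem (i N : ℕ) : ((TT (i+1) N).filter (fun S => 0 ∉ S)).card =
    if i + 1 ≤ N then (TT (i+1) (N - (i+1))).card else 0 := by
  split_ifs with h
  · symm
    apply card_nbij' (fun S => S.image (fun x => x + 1)) (fun S => S.image (fun x => x - 1))
    · intro S hS
      simp only [mem_coe, mem_TT, mem_filter] at hS ⊢
      rw [card_image_of_injective _ (add_left_injective 1),
        sum_image (fun x _ y _ h => by simpa using h), sum_add_distrib]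
      simp
      omega
    · intro S hS
      simp only [mem_coe, mem_TT, mem_filter] at hS ⊢
      obtain ⟨⟨h1, h2⟩, h3⟩ := hS
      have hp : ∀ x ∈ S, 1 ≤ x := fun x hx => Nat.one_le_iff_ne_zero.2 (fun h => h3 (h ▸ hx))
      have inj : Set.InjOn (fun x => x - 1) (S : Set ℕ) := by
        intro x hx y hy hxy
        have := hp x hx
        have := hp y hy
        simp only at hxy
        omega
      rw [card_image_of_injOn inj, sum_image inj]
      refine ⟨h1, ?_⟩
      have : ∑ x ∈ S, x = ∑ x ∈ S, (x - 1) + S.card := by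
        rw [card_eq_sum_ones, ← sum_add_distrib]
        exact sum_congr rfl (fun x hx => by have := hp x hx; omega)
      omega
    · intro S hS
      simp [image_image, Function.comp_def]
    · intro S hS
      simp only [mem_coe, mem_TT, mem_filter] at hS
      simp only [image_image]
      conv_rhs => rw [← image_id (s := S)]
      refine image_congr (fun x hx => ?_)
      have : x ≠ 0 := fun h => hS.2 (h ▸ hx)
      simp
      omega
  · rw [card_eq_zero, filter_eq_empty_iff]
    intro S hS h0
    rw [mem_TT] at hS
    have : S.card ≤ ∑ x ∈ S, x := by
      rw [card_eq_sum_ones]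
      exact sum_le_sum (fun x hx => Nat.one_le_iff_ne_zero.2 (fun h => h0 (h ▸ hx)))
    omega

lemma card_zero_mem (i N : ℕ) : ((TT (i+1) N).filter (fun S => 0 ∈ S)).card =
    if i ≤ N then (TT i (N - i)).card else 0 := by
  have hsum : ∀ S : Finset ℕ, 0 ∈ S → S.card = i + 1 → ∑ x ∈ S, x = ∑ x ∈ S.erase 0, (x - 1) + i := by
    intro S h0 hc
    have hc' : (S.erase 0).card = i := by rw [card_erase_of_mem h0]; omega
    rw [← add_sum_erase S (fun x => x) h0, zero_add]
    conv_rhs => rw [← hc', card_eq_sum_ones, ← sum_add_distrib]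
    refine sum_congr rfl (fun x hx => ?_)
    have := (mem_erase.1 hx).1
    omega
  split_ifs with h
  · symm
    apply card_nbij' (fun S => insert 0 (S.image (fun x => x + 1)))
      (fun S => (S.erase 0).image (fun x => x - 1))
    · intro S hS
      simp only [mem_coe, mem_TT, mem_filter] at hS ⊢
      have h0 : 0 ∉ S.image (fun x => x + 1) := by simp
      rw [card_insert_of_notMem h0, sum_insert h0,
        card_image_of_injective _ (add_left_injective 1),
        sum_image (fun x _ y _ h => by simpa using h), sum_add_distrib]
      simp
      omega
    · intro S hS
      simp only [mem_coe, mem_TT, mem_filter] at hS ⊢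
      obtain ⟨⟨h1, h2⟩, h3⟩ := hS
      have inj : Set.InjOn (fun x => x - 1) (S.erase 0 : Set ℕ) := by
        intro x hx y hy hxy
        have := (mem_erase.1 (mem_coe.1 hx)).1
        have := (mem_erase.1 (mem_coe.1 hy)).1
        simp only at hxy
        omega
      rw [card_image_of_injOn inj, sum_image inj, card_erase_of_mem h3]
      have := hsum S h3 h1
      omega
    · intro S hS
      have h0 : 0 ∉ S.image (fun x => x + 1) := by simp
      simp only [erase_insert h0]
      simp [image_image, Function.comp_def]
    · intro S hS
      simp only [mem_coe, mem_TT, mem_filter] at hS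
      simp only [image_image]
      conv_rhs => rw [← insert_erase hS.2, ← image_id (s := S.erase 0)]
      congr 1
      refine image_congr (fun x hx => ?_)
      have := (mem_erase.1 (mem_coe.1 hx)).1
      simp
      omega
  · rw [card_eq_zero, filter_eq_empty_iff]
    intro S hS h0
    rw [mem_TT] at hS
    have := hsum S h0 hS.1
    omega

lemma DD_rec (i : ℕ) : DD (i+1) = X^i * DD i + X^(i+1) * DD (i+1) := by
  ext N
  rw [map_add, coeff_X_pow_mul', coeff_X_pow_mul']
  simp only [DD, coeff_mk]
  rw [← card_filter_add_card_filter_not (s := TT (i+1) N) (fun S => 0 ∈ S), card_zero_mem, card_zero_notMem]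
  push_cast
  rfl

def NN (f : PowerSeries ℤ) : Prop := ∀ n, 0 ≤ coeff n f

lemma NN_DD (i : ℕ) : NN (DD i) := fun n => by simp [DD]

lemma NN_mul {f g : PowerSeries ℤ} (hf : NN f) (hg : NN g) : NN (f * g) := fun n => by
  rw [coeff_mul]
  exact sum_nonneg (fun p _ => mul_nonneg (hf _) (hg _))

lemma NN_Xpow (k : ℕ) : NN (X^k) := fun n => by
  rw [coeff_X_pow]; split_ifs <;> simp

lemma NN_of_rec {f g : PowerSeries ℤ} (i : ℕ) (hg : NN g) (h : f = g + X^(i+1) * f) : NN f := by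
  intro n
  induction n using Nat.strong_induction_on with
  | _ n ih =>
    rw [h, map_add, coeff_X_pow_mul']
    have := hg n
    split_ifs with h1
    · have := ih (n - (i+1)) (by omega)
      omega
    · omega

lemma NN_A (s : ℕ) (hs : 1 ≤ s) (i : ℕ) (h : s ≤ i) : NN ((1 - X^s) * DD i) := by
  induction i with
  | zero => omega
  | succ i ih =>
    have hr := DD_rec i
    rcases Nat.lt_or_ge i s with h1 | h1
    · have : s = i + 1 := by omega
      subst this
      have : (1 - X^(i+1)) * DD (i+1) = X^i * DD i := by linear_combination hr
      rw [this]
      exact NN_mul (NN_Xpow _) (NN_DD _)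
    · refine NN_of_rec (g := X^i * ((1 - X^s) * DD i)) i (NN_mul (NN_Xpow _) (ih h1)) ?_
      linear_combination (1 - X^s) * hr

lemma NN_B (s t : ℕ) (hs : 1 ≤ s) (hst : s < t) (i : ℕ) (h : t ≤ i) :
    NN ((1 - X^s) * (1 - X^t) * DD i) := by
  induction i with
  | zero => omega
  | succ i ih =>
    have hr := DD_rec i
    rcases Nat.lt_or_ge i t with h1 | h1
    · have : t = i + 1 := by omega
      subst this
      have : (1 - X^s) * (1 - X^(i+1)) * DD (i+1) = X^i * ((1 - X^s) * DD i) := by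
        linear_combination (1 - X^s) * hr
      rw [this]
      exact NN_mul (NN_Xpow _) (NN_A s hs i (by omega))
    · refine NN_of_rec (g := X^i * ((1 - X^s) * (1 - X^t) * DD i)) i (NN_mul (NN_Xpow _) (ih h1)) ?_
      linear_combination (1 - X^s) * (1 - X^t) * hr

lemma NN_C (s t : ℕ) (hs : 1 ≤ s) (ht : 1 ≤ t) (hst : s ≠ t) (i : ℕ) (h : t ≤ i) (h' : s ≤ i) :
    NN ((1 - X^s) * (1 - X^t) * DD i) := by
  rcases Nat.lt_or_ge s t with h1 | h1
  · exact NN_B s t hs h1 i h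
  · rw [mul_comm (1 - X^s)]
    exact NN_B t s ht (by omega) i h'

/-- weight -/
def WW (M n a a' i j : ℕ) : ℕ :=
  ∑ st ∈ range (n+1) ×ˢ range (n+1),
    if M * st.1 + a * i + (M * st.2 + a' * j) = M * n then (TT i st.1).card * (TT j st.2).card else 0

lemma WW_eq (M n a a' i j e : ℕ) (hM : 0 < M) (he : a * i + a' * j = M * e) :
    (WW M n a a' i j : ℤ) = coeff n (X^e * (DD i * DD j)) := by
  have key : ∀ s t : ℕ, M * s + a * i + (M * t + a' * j) = M * n ↔ e + s + t = n := by
    intro s t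
    have : M * s + a * i + (M * t + a' * j) = M * (e + s + t) := by linarith
    rw [this]
    exact Nat.mul_right_inj (by omega)
  rw [coeff_X_pow_mul']
  unfold WW
  simp only [key]
  rw [← sum_filter]
  split_ifs with h
  · rw [coeff_mul]
    have : (range (n+1) ×ˢ range (n+1)).filter (fun st : ℕ × ℕ => e + st.1 + st.2 = n)
        = antidiagonal (n - e) := by
      ext ⟨s, t⟩
      simp only [mem_filter, mem_product, mem_range, HasAntidiagonal.mem_antidiagonal]
      omega
    rw [this]
    simp [DD]
  · have : (range (n+1) ×ˢ range (n+1)).filter (fun st : ℕ × ℕ => e + st.1 + st.2 = n) = ∅ := by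
      rw [filter_eq_empty_iff]
      rintro ⟨s, t⟩ _
      simp only
      omega
    rw [this]
    simp

lemma WW_zero (M n a a' i j : ℕ) (h : ¬ M ∣ a * i + a' * j) : WW M n a a' i j = 0 := by
  unfold WW
  refine sum_eq_zero (fun st _ => if_neg (fun hh => h ?_))
  have : M ∣ M * (st.1 + st.2) + (a * i + a' * j) := ⟨n, by linarith⟩
  exact (Nat.dvd_add_right (dvd_mul_right _ _)).1 this

lemma WW_pair (M n a b i j : ℕ) (ha : 1 ≤ a) (hab : a < b) (hb : 2 * b < M)
    (hbM : Nat.Coprime b M) (hij : j ≤ i) :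
    WW M n b (M-b) i j + WW M n b (M-b) j i ≤ WW M n a (M-a) i j + WW M n a (M-a) j i := by
  obtain ⟨d, rfl⟩ := Nat.exists_eq_add_of_le hij
  obtain ⟨a', ha'⟩ : ∃ a', M = a + a' := ⟨M - a, by omega⟩
  obtain ⟨b', hb'⟩ : ∃ b', M = b + b' := ⟨M - b, by omega⟩
  have e1 : M - a = a' := by omega
  have e2 : M - b = b' := by omega
  rw [e1, e2]
  by_cases hd : M ∣ d
  · obtain ⟨k, rfl⟩ := hd
    have E : ∀ c c', M = c + c' → c * (j + M * k) + c' * j = M * (j + c * k) := by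
      intro c c' h; rw [h]; ring
    have E' : ∀ c c', M = c + c' → c * j + c' * (j + M * k) = M * (j + c' * k) := by
      intro c c' h; rw [h]; ring
    have hM : 0 < M := by omega
    zify
    rw [WW_eq _ _ _ _ _ _ _ hM (E a a' ha'), WW_eq _ _ _ _ _ _ _ hM (E b b' hb'),
      WW_eq _ _ _ _ _ _ _ hM (E' a a' ha'), WW_eq _ _ _ _ _ _ _ hM (E' b b' hb')]
    rcases Nat.eq_zero_or_pos k with rfl | hk
    · simp
    · obtain ⟨u, rfl⟩ := Nat.exists_eq_add_of_lt hab
      obtain ⟨v, rfl⟩ : ∃ v, a' = a + (u + 1) + v := ⟨a' - (a + (u+1)), by omega⟩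
      have hb'' : b' = a + v := by omega
      subst hb''
      have hne : (u+1) * k ≠ v * k := by
        intro h
        have := Nat.eq_of_mul_eq_mul_right hk h
        omega
      have := NN_mul (NN_mul (NN_Xpow (j + a * k)) (NN_C ((u+1)*k) (v*k) (Nat.mul_pos (by omega) hk)
        (Nat.mul_pos (by omega) hk) hne (j + M * k)
        (le_add_left (Nat.mul_le_mul_right k (by omega)))
        (le_add_left (Nat.mul_le_mul_right k (by omega))))) (NN_DD j) n
      rw [← sub_nonneg, ← map_add, ← map_add, ← map_sub]
      convert this using 2
      ring
  · have h0 : ∀ c c', M = c + c' → Nat.Coprime c M →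
        ¬ M ∣ c * (j + d) + c' * j ∧ ¬ M ∣ c' * (j + d) + c * j := by
      intro c c' h hc
      have hc' : Nat.Coprime c' M := by
        rw [h] at hc ⊢
        simpa [Nat.coprime_comm] using hc
      have g : ∀ x y, M = x + y → Nat.Coprime x M → ¬ M ∣ x * (j + d) + y * j := by
        intro x y hxy hx hdv
        have : x * (j + d) + y * j = M * j + x * d := by rw [hxy]; ring
        rw [this] at hdv
        exact hd (hx.symm.dvd_of_dvd_mul_left ((Nat.dvd_add_right (dvd_mul_right _ _)).1 hdv))
      exact ⟨g c c' h hc, g c' c (by omega) hc'⟩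
    obtain ⟨h1, h2⟩ := h0 b b' hb' hbM
    rw [WW_zero _ _ _ _ _ _ h1, WW_zero _ _ _ _ _ _ (by rwa [add_comm] at h2)]
    omega

def dec (M a : ℕ) (S : Finset ℕ) : Finset ℕ := (S.filter (fun x => x % M = a)).image (fun x => x / M)
def enc (M a : ℕ) (S : Finset ℕ) : Finset ℕ := S.image (fun x => M * x + a)
def comb (M a a' : ℕ) (A B : Finset ℕ) : Finset ℕ := enc M a A ∪ enc M a' B

lemma mem_enc (M a x : ℕ) (A : Finset ℕ) (h : a < M) : x ∈ enc M a A ↔ x % M = a ∧ x / M ∈ A := by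
  unfold enc
  rw [mem_image]
  constructor
  · rintro ⟨y, hy, rfl⟩
    rw [Nat.mul_add_mod, Nat.mod_eq_of_lt h, Nat.mul_add_div (by omega), Nat.div_eq_of_lt h]
    exact ⟨rfl, hy⟩
  · rintro ⟨h1, h2⟩
    exact ⟨_, h2, by rw [← h1]; exact Nat.div_add_mod x M⟩

lemma mem_dec (M a y : ℕ) (S : Finset ℕ) (h : a < M) : y ∈ dec M a S ↔ M * y + a ∈ S := by
  unfold dec
  simp only [mem_image, mem_filter]
  constructor
  · rintro ⟨x, ⟨h1, h2⟩, rfl⟩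
    rw [← h2, Nat.div_add_mod]; exact h1
  · intro hy
    refine ⟨_, ⟨hy, ?_⟩, ?_⟩
    · rw [Nat.mul_add_mod, Nat.mod_eq_of_lt h]
    · rw [Nat.mul_add_div (by omega), Nat.div_eq_of_lt h]; rfl

lemma enc_inj (M a : ℕ) (h : a < M) : Function.Injective (fun x => M * x + a) := by
  intro x y hxy
  simp only [add_left_inj] at hxy
  exact Nat.eq_of_mul_eq_mul_left (by omega) hxy

lemma card_comb (M a a' : ℕ) (h : a < M) (h' : a' < M) (hne : a ≠ a') (A B : Finset ℕ) :
    (comb M a a' A B).card = A.card + B.card ∧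
    ∑ x ∈ comb M a a' A B, x = (M * ∑ x ∈ A, x + a * A.card) + (M * ∑ x ∈ B, x + a' * B.card) := by
  have hd : Disjoint (enc M a A) (enc M a' B) := by
    rw [Finset.disjoint_left]
    intro x hx hx'
    rw [mem_enc _ _ _ _ h] at hx
    rw [mem_enc _ _ _ _ h'] at hx'
    omega
  unfold comb
  rw [card_union_of_disjoint hd, sum_union hd]
  unfold enc
  rw [card_image_of_injective _ (enc_inj M a h), card_image_of_injective _ (enc_inj M a' h'),
    sum_image (fun x _ y _ e => enc_inj M a h e), sum_image (fun x _ y _ e => enc_inj M a' h' e)]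
  refine ⟨rfl, ?_⟩
  simp [sum_add_distrib, mul_sum, mul_comm]

lemma comb_dec (M a a' : ℕ) (h : a < M) (h' : a' < M) (S : Finset ℕ)
    (hS : ∀ x ∈ S, x % M = a ∨ x % M = a') : comb M a a' (dec M a S) (dec M a' S) = S := by
  ext x
  unfold comb
  rw [mem_union, mem_enc _ _ _ _ h, mem_enc _ _ _ _ h', mem_dec _ _ _ _ h, mem_dec _ _ _ _ h']
  constructor
  · rintro (⟨h1, h2⟩ | ⟨h1, h2⟩)
    · rwa [← h1, Nat.div_add_mod] at h2
    · rwa [← h1, Nat.div_add_mod] at h2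
  · intro hx
    rcases hS x hx with h1 | h1
    · left; refine ⟨h1, ?_⟩; rw [← h1, Nat.div_add_mod]; exact hx
    · right; refine ⟨h1, ?_⟩; rw [← h1, Nat.div_add_mod]; exact hx

lemma dec_comb (M a a' : ℕ) (h : a < M) (h' : a' < M) (hne : a ≠ a') (A B : Finset ℕ) :
    dec M a (comb M a a' A B) = A ∧ dec M a' (comb M a a' A B) = B := by
  constructor
  · ext x
    rw [mem_dec _ _ _ _ h, comb, mem_union, mem_enc _ _ _ _ h, mem_enc _ _ _ _ h',
      Nat.mul_add_mod, Nat.mod_eq_of_lt h, Nat.mul_add_div (by omega), Nat.div_eq_of_lt h]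
    simp [hne]
  · ext x
    rw [mem_dec _ _ _ _ h', comb, mem_union, mem_enc _ _ _ _ h, mem_enc _ _ _ _ h',
      Nat.mul_add_mod, Nat.mod_eq_of_lt h', Nat.mul_add_div (by omega), Nat.div_eq_of_lt h']
    simp [hne.symm]

lemma mod_comb (M a a' : ℕ) (h : a < M) (h' : a' < M) (A B : Finset ℕ) :
    ∀ x ∈ comb M a a' A B, x % M = a ∨ x % M = a' := by
  intro x hx
  rw [comb, mem_union, mem_enc _ _ _ _ h, mem_enc _ _ _ _ h'] at hx
  tauto

def GG (M a a' N m : ℕ) : Finset (Finset ℕ) :=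
  (TT m N).filter (fun S => ∀ x ∈ S, x % M = a ∨ x % M = a')

lemma card_GG (M a a' n m : ℕ) (h : a < M) (h' : a' < M) (hne : a ≠ a') :
    (GG M a a' (M * n) m).card = ∑ ij ∈ antidiagonal m, WW M n a a' ij.1 ij.2 := by
  unfold WW
  rw [← sum_product', card_eq_sum_card_fiberwise (t := antidiagonal m ×ˢ (range (n+1) ×ˢ range (n+1)))
    (f := fun S => (((dec M a S).card, (dec M a' S).card), (∑ x ∈ dec M a S, x, ∑ x ∈ dec M a' S, x)))]
  · refine sum_congr rfl ?_
    rintro ⟨⟨i, j⟩, ⟨s, t⟩⟩ hm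
    simp only [mem_product, HasAntidiagonal.mem_antidiagonal, mem_range] at hm
    simp only
    split_ifs with hc
    · rw [← card_product]
      apply card_nbij' (fun S => (dec M a S, dec M a' S)) (fun p => comb M a a' p.1 p.2)
      · intro S hS
        simp only [coe_filter, Set.mem_ofPred_eq, Prod.mk.injEq, mem_coe, mem_product, mem_TT] at hS ⊢
        tauto
      · rintro ⟨A, B⟩ hS
        simp only [mem_coe, mem_product, mem_TT, GG, mem_filter] at hS ⊢
        obtain ⟨⟨rfl, rfl⟩, ⟨rfl, rfl⟩⟩ := hS
        have hcc := card_comb M a a' h h' hne A B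
        have hdd := dec_comb M a a' h h' hne A B
        refine ⟨⟨⟨by omega, by rw [hcc.2]; exact hc⟩, mod_comb M a a' h h' A B⟩, ?_⟩
        rw [hdd.1, hdd.2]
      · intro S hS
        simp only [mem_coe, GG, mem_filter] at hS
        exact comb_dec M a a' h h' S hS.1.2
      · rintro ⟨A, B⟩ hS
        have hdd := dec_comb M a a' h h' hne A B
        simp only [hdd.1, hdd.2]
    · rw [card_eq_zero, filter_eq_empty_iff]
      intro S hS he
      simp only [GG, mem_filter, mem_TT] at hS
      simp only [Prod.mk.injEq] at he
      obtain ⟨⟨rfl, rfl⟩, ⟨rfl, rfl⟩⟩ := he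
      have hcc := card_comb M a a' h h' hne (dec M a S) (dec M a' S)
      rw [comb_dec M a a' h h' S hS.2] at hcc
      exact hc (by rw [← hcc.2]; exact hS.1.2)
  · intro S hS
    simp only [mem_coe, GG, mem_filter, mem_TT] at hS
    have hcc := card_comb M a a' h h' hne (dec M a S) (dec M a' S)
    rw [comb_dec M a a' h h' S hS.2] at hcc
    simp only [mem_coe, mem_product, HasAntidiagonal.mem_antidiagonal, mem_range]
    have hM : 0 < M := by omega
    refine ⟨by omega, Nat.lt_succ_of_le (Nat.le_of_mul_le_mul_left (c := M) ?_ hM),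
      Nat.lt_succ_of_le (Nat.le_of_mul_le_mul_left (c := M) ?_ hM)⟩ <;> omega

lemma card_PP (M a a' N m : ℕ) (h : 0 < a) (h' : 0 < a') :
    (Finset.univ.filter (fun p : Nat.Partition N =>
        Multiset.card p.parts = m ∧ p.parts.Nodup ∧
        ∀ x ∈ p.parts, x % M = a ∨ x % M = a')).card = (GG M a a' N m).card := by
  refine card_bij (fun p _ => p.parts.toFinset) ?_ ?_ ?_
  · intro p hp
    simp only [mem_filter, mem_univ, true_and] at hp
    simp only [GG, mem_filter, mem_TT, Multiset.mem_toFinset]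
    refine ⟨⟨?_, ?_⟩, hp.2.2⟩
    · rw [Multiset.toFinset_card_of_nodup hp.2.1]; exact hp.1
    · have := p.parts_sum
      rw [Finset.sum, Multiset.toFinset_val, hp.2.1.dedup, Multiset.map_id']
      exact this
  · intro p hp q hq hpq
    simp only [mem_filter, mem_univ, true_and] at hp hq
    have := congrArg Finset.val hpq
    simp only [Multiset.toFinset_val, hp.2.1.dedup, hq.2.1.dedup] at this
    exact Nat.Partition.ext this
  · intro S hS
    simp only [GG, mem_filter, mem_TT] at hS
    refine ⟨⟨S.val, ?_, ?_⟩, ?_, ?_⟩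
    · intro x hx
      rcases Nat.eq_zero_or_pos x with rfl | h0
      · have := hS.2 0 hx
        simp at this
        omega
      · exact h0
    · have := hS.1.2
      rwa [Finset.sum, Multiset.map_id'] at this
    · simp only [mem_filter, mem_univ, true_and]
      exact ⟨hS.1.1, S.nodup, hS.2⟩
    · simp


theorem distinct_partition_inequality_mod_M (M a b : ℕ) (hM : 5 ≤ M)
    (ha : 1 ≤ a) (hab : a < b) (hb : 2 * b < M)
    (haM : Nat.Coprime a M) (hbM : Nat.Coprime b M)
    (n m : ℕ) (hn : 1 ≤ n) (hm1 : 1 ≤ m) (hm2 : m ≤ M * n) :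
    (Finset.univ.filter (fun p : Nat.Partition (M * n) =>
        Multiset.card p.parts = m ∧ p.parts.Nodup ∧
        ∀ x ∈ p.parts, x % M = a ∨ x % M = M - a)).card ≥
    (Finset.univ.filter (fun p : Nat.Partition (M * n) =>
        Multiset.card p.parts = m ∧ p.parts.Nodup ∧
        ∀ x ∈ p.parts, x % M = b ∨ x % M = M - b)).card := by

  rw [card_PP M a (M-a) _ m (by omega) (by omega), card_PP M b (M-b) _ m (by omega) (by omega),
    card_GG M a (M-a) n m (by omega) (by omega) (by omega),
    card_GG M b (M-b) n m (by omega) (by omega) (by omega)]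
  have two : ∀ c c', 2 * ∑ ij ∈ antidiagonal m, WW M n c c' ij.1 ij.2 =
      ∑ ij ∈ antidiagonal m, (WW M n c c' ij.1 ij.2 + WW M n c c' ij.2 ij.1) := by
    intro c c'
    rw [sum_add_distrib, ← Nat.sum_antidiagonal_swap (f := fun ij => WW M n c c' ij.2 ij.1), two_mul]
    rfl
  have : 2 * ∑ ij ∈ antidiagonal m, WW M n b (M-b) ij.1 ij.2 ≤
      2 * ∑ ij ∈ antidiagonal m, WW M n a (M-a) ij.1 ij.2 := by
    rw [two, two]
    refine sum_le_sum ?_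
    rintro ⟨i, j⟩ _
    rcases Nat.le_total j i with h | h
    · exact WW_pair M n a b i j ha hab hb hbM h
    · have := WW_pair M n a b j i ha hab hb hbM h
      simp only
      omega
  omega
end

section
/- For every natural number n, the number of partitions of n into parts congruent to 1 or 4 modulo 5 is greater than or equal to the number of partitions of n into parts congruent to 2 or 3 modulo 5; that is, p_{1,5}(n) ≥ p_{2,5}(n). -/
namespace Ehren

/-- number of parts congruent to `r` modulo 5 -/
def c (r : ℕ) (s : Multiset ℕ) : ℕ := s.countP (fun x => x % 5 = r)

/-- sends residues 2, 3 to 1, 4 -/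
def g1 (x : ℕ) : ℕ := if x % 5 = 2 then x - 1 else x + 1

/-- sends residues 3, 2 to 1, 4 -/
def g2 (x : ℕ) : ℕ := if x % 5 = 3 then x - 2 else x + 2

/-- inverse of `g1` -/
def h1 (x : ℕ) : ℕ := if x % 5 = 1 then x + 1 else x - 1

/-- inverse of `g2` -/
def h2 (x : ℕ) : ℕ := if x % 5 = 1 then x + 2 else x - 2

/-- the injection -/
def f (s : Multiset ℕ) : Multiset ℕ :=
  if c 3 s ≤ c 2 s then s.map g1 + Multiset.replicate (c 2 s - c 3 s) 1
  else if (c 3 s - c 2 s) % 2 = 1 then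
    s.map g2 + Multiset.replicate (2 * (c 3 s - c 2 s)) 1
  else s.map g2 + Multiset.replicate (2 * (c 3 s - c 2 s) - 4) 1 + {4}

/-- all parts are 2 or 3 modulo 5 -/
def Q (s : Multiset ℕ) : Prop := ∀ x ∈ s, x % 5 = 2 ∨ x % 5 = 3

theorem c_cons (r a : ℕ) (s : Multiset ℕ) : c r (a ::ₘ s) = c r s + if a % 5 = r then 1 else 0 := by
  simp [c, Multiset.countP_cons]

theorem c_add (r : ℕ) (s t : Multiset ℕ) : c r (s + t) = c r s + c r t := by
  simp [c]

theorem c_rep (r n : ℕ) : c r (Multiset.replicate n 1) = if r = 1 then n else 0 := by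
  induction n with
  | zero => simp [c]
  | succ n ih => rw [Multiset.replicate_succ, c_cons, ih]; split_ifs <;> omega

theorem key (s : Multiset ℕ) (hs : Q s) :
    c 1 (s.map g1) = c 2 s ∧ c 4 (s.map g1) = c 3 s ∧
    c 1 (s.map g2) = c 3 s ∧ c 4 (s.map g2) = c 2 s ∧
    (s.map g1).sum + c 2 s = s.sum + c 3 s ∧
    (s.map g2).sum + 2 * c 3 s = s.sum + 2 * c 2 s ∧
    (s.map g1).map h1 = s ∧ (s.map g2).map h2 = s ∧
    (∀ x ∈ s.map g1, x % 5 = 1 ∨ x % 5 = 4) ∧ (∀ x ∈ s.map g2, x % 5 = 1 ∨ x % 5 = 4) := by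
  induction s using Multiset.induction with
  | empty => simp [c]
  | cons a s ih =>
    have ha : a % 5 = 2 ∨ a % 5 = 3 := hs a (by simp)
    obtain ⟨e1, e2, e3, e4, e5, e6, e7, e8, e9, e10⟩ := ih (fun x hx => hs x (by simp [hx]))
    simp only [Multiset.map_cons, c_cons, Multiset.sum_cons, e1, e2, e3, e4, e7, e8]
    have k1 : h1 (g1 a) = a := by unfold g1 h1; split_ifs <;> omega
    have k2 : h2 (g2 a) = a := by unfold g2 h2; split_ifs <;> omega
    have m1 : g1 a % 5 = 1 ∨ g1 a % 5 = 4 := by unfold g1; split_ifs <;> omega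
    have m2 : g2 a % 5 = 1 ∨ g2 a % 5 = 4 := by unfold g2; split_ifs <;> omega
    refine ⟨?_, ?_, ?_, ?_, ?_, ?_, by rw [k1], by rw [k2], ?_, ?_⟩
    · unfold g1; split_ifs <;> omega
    · unfold g1; split_ifs <;> omega
    · unfold g2; split_ifs <;> omega
    · unfold g2; split_ifs <;> omega
    · unfold g1 at e5 ⊢; split_ifs <;> omega
    · unfold g2 at e6 ⊢; split_ifs <;> omega
    · intro x hx
      rcases Multiset.mem_cons.1 hx with rfl | hx
      exacts [m1, e9 x hx]
    · intro x hx
      rcases Multiset.mem_cons.1 hx with rfl | hx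
      exacts [m2, e10 x hx]

theorem f_sum (s : Multiset ℕ) (hs : Q s) : (f s).sum = s.sum := by
  obtain ⟨-, -, -, -, e5, e6, -⟩ := key s hs
  unfold f
  split_ifs <;> simp only [Multiset.sum_add, Multiset.sum_replicate, Multiset.sum_singleton,
    smul_eq_mul] <;> omega

theorem f_mod (s : Multiset ℕ) (hs : Q s) : ∀ x ∈ f s, x % 5 = 1 ∨ x % 5 = 4 := by
  obtain ⟨-, -, -, -, -, -, -, -, e9, e10⟩ := key s hs
  intro x hx
  unfold f at hx
  split_ifs at hx <;> simp only [Multiset.mem_add, Multiset.mem_singleton] at hx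
  · rcases hx with hx | hx
    · exact e9 x hx
    · have := Multiset.eq_of_mem_replicate hx; omega
  · rcases hx with hx | hx
    · exact e10 x hx
    · have := Multiset.eq_of_mem_replicate hx; omega
  · rcases hx with (hx | hx) | hx
    · exact e10 x hx
    · have := Multiset.eq_of_mem_replicate hx; omega
    · omega

theorem f_inj (s t : Multiset ℕ) (hs : Q s) (ht : Q t) (h : f s = f t) : s = t := by
  obtain ⟨a1, a2, a3, a4, -, -, a7, a8, -⟩ := key s hs
  obtain ⟨b1, b2, b3, b4, -, -, b7, b8, -⟩ := key t ht
  have q1 : c 1 (f s) = c 1 (f t) := by rw [h]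
  have q4 : c 4 (f s) = c 4 (f t) := by rw [h]
  have s1 : c 1 {4} = 0 := by simp [c, Multiset.countP_eq_zero]
  have s4 : c 4 {4} = 1 := by decide
  unfold f at h q1 q4
  split_ifs at h q1 q4 <;>
    simp only [c_add, c_rep, s1, s4, a1, a2, a3, a4, b1, b2, b3, b4, if_true,
      show (4 : ℕ) ≠ 1 by decide, if_false] at q1 q4 <;> try omega
  all_goals
    have w2 : c 2 s = c 2 t := by omega
    have w3 : c 3 s = c 3 t := by omega
    rw [w2, w3] at h
  · rw [← a7, ← b7, add_right_cancel h]
  · rw [← a8, ← b8, add_right_cancel h]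
  · rw [← a8, ← b8, add_right_cancel (add_right_cancel h)]

end Ehren

theorem ehrenpreis_inequality (n : ℕ) :
    (Finset.univ.filter (fun p : Nat.Partition n =>
        ∀ x ∈ p.parts, x % 5 = 1 ∨ x % 5 = 4)).card ≥
    (Finset.univ.filter (fun p : Nat.Partition n =>
        ∀ x ∈ p.parts, x % 5 = 2 ∨ x % 5 = 3)).card := by
  have hinj : Function.Injective (fun p : Nat.Partition n => p.parts) :=
    fun p q h => Nat.Partition.ext h
  rw [ge_iff_le, ← Finset.card_image_of_injective _ hinj, ← Finset.card_image_of_injective _ hinj]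
  apply Finset.card_le_card_of_injOn Ehren.f
  · intro s hs
    simp only [Finset.coe_image, Set.mem_image, Finset.mem_coe, Finset.mem_filter,
      Finset.mem_univ, true_and] at hs ⊢
    obtain ⟨p, hp, rfl⟩ := hs
    have hm := Ehren.f_mod p.parts hp
    refine ⟨⟨Ehren.f p.parts, ?_, ?_⟩, hm, rfl⟩
    · intro i hi
      have := hm i hi
      omega
    · rw [Ehren.f_sum _ hp, p.parts_sum]
  · intro s hs t ht h
    simp only [Finset.coe_image, Set.mem_image, Finset.mem_coe, Finset.mem_filter,
      Finset.mem_univ, true_and] at hs ht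
    obtain ⟨p, hp, rfl⟩ := hs
    obtain ⟨q, hq, rfl⟩ := ht
    exact Ehren.f_inj _ _ hp hq h
end

section
/- For every natural number n, the difference p_{1,5}(n) − p_{2,5}(n) equals the sum over all integers k ≥ 1 with k² ≤ n of the number of partitions of n − k² into parts each of size at most k − 1. (Equivalently, 1/(q,q^4;q^5)_∞ − 1/(q^2,q^3;q^5)_∞ = Σ_{k≥1} q^{k²}/(q;q)_{k−1} as an identity of coefficients; in particular the k = 1 term contributes 1 exactly when n = 1.) -/
namespace RR
open Finset

variable {R : Type*} [CommRing R]

/-- Gaussian binomials. -/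
def G (q : R) : ℕ → ℕ → R
  | _, 0 => 1
  | 0, _ + 1 => 0
  | n + 1, k + 1 => q ^ (k + 1) * G q n (k + 1) + G q n k

/-- finite q-factorial. -/
def P (q : R) (n : ℕ) : R := ∏ i ∈ range n, (1 - q ^ (i + 1))

/-- theta weights. -/
def w (u v q : R) : ℤ → R
  | Int.ofNat k => (-u) ^ k * q ^ (k.choose 2)
  | Int.negSucc k => (-v) ^ (k + 1) * q ^ ((k + 1).choose 2)

lemma G_zero (q : R) (n : ℕ) : G q n 0 = 1 := by cases n <;> rfl

lemma G_succ (q : R) (n k : ℕ) :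
    G q (n + 1) (k + 1) = q ^ (k + 1) * G q n (k + 1) + G q n k := rfl

lemma G_lt (q : R) : ∀ n k : ℕ, n < k → G q n k = 0
  | _, 0, h => by omega
  | 0, _ + 1, _ => rfl
  | n + 1, k + 1, h => by
    rw [G_succ, G_lt q n (k + 1) (by omega), G_lt q n k (by omega)]; simp

lemma P_succ (q : R) (n : ℕ) : P q (n + 1) = P q n * (1 - q ^ (n + 1)) := by
  simp [P, prod_range_succ]

lemma G_self (q : R) : ∀ n : ℕ, G q n n = 1
  | 0 => rfl
  | n + 1 => by rw [G_succ, G_lt q n (n + 1) (by omega), G_self q n]; simp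

lemma G_fac (q : R) : ∀ n a b : ℕ, a + b = n → G q n a * (P q a * P q b) = P q n
  | n, 0, b, h => by
    have : b = n := by omega
    subst this; simp [G_zero, P]
  | n, a + 1, 0, h => by
    have : n = a + 1 := by omega
    subst this; simp [G_self, P]
  | 0, a + 1, b + 1, h => by omega
  | n + 1, a + 1, b + 1, h => by
    have h1 := G_fac q n (a + 1) b (by omega)
    have h2 := G_fac q n a (b + 1) (by omega)
    have hn : n = a + b + 1 := by omega
    subst hn
    rw [G_succ, P_succ q (a + b + 1), P_succ q b]
    rw [P_succ q a] at h1 ⊢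
    rw [P_succ q b] at h2
    linear_combination q ^ (a + 1) * (1 - q ^ (b + 1)) * h1 + (1 - q ^ (a + 1)) * h2

lemma G_diff (q : R) : ∀ n k : ℕ, k ≤ n →
    (1 - q ^ (k + 1)) * G q n (k + 1) = (1 - q ^ (n - k)) * G q n k
  | 0, k, h => by
    have : k = 0 := by omega
    subst this; simp [G]
  | n + 1, 0, _ => by
    have h := G_diff q n 0 (by omega)
    rw [G_succ, G_zero] at *
    simp only [G_zero] at *
    simp only [Nat.sub_zero, zero_add] at *
    linear_combination q * h
  | n + 1, k + 1, h => by
    rcases Nat.lt_or_ge k n with hk | hk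
    · have h1 := G_diff q n (k + 1) (by omega)
      have h2 := G_diff q n k (by omega)
      obtain ⟨d, rfl⟩ : ∃ d, n = k + 1 + d := ⟨n - k - 1, by omega⟩
      rw [show k + 1 + d - (k + 1) = d by omega] at h1
      rw [show k + 1 + d - k = d + 1 by omega] at h2
      rw [show k + 1 + d + 1 - (k + 1) = d + 1 by omega]
      rw [G_succ, G_succ]
      linear_combination q ^ (k + 1 + 1) * h1 + h2
    · have : k = n := by omega
      subst this
      rw [G_lt q _ (k + 1 + 1) (by omega)]; simp

lemma G_succ2 (q : R) (n k : ℕ) (h : k ≤ n) :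
    G q (n + 1) (k + 1) = G q n (k + 1) + q ^ (n - k) * G q n k := by
  rw [G_succ]; linear_combination - G_diff q n k h

lemma sum1 (q : R) (f : ℕ → R) (K : ℕ) :
    ∑ i ∈ range (K + 2), f i * G q (K + 1) i =
      ∑ i ∈ range (K + 1), (f (i + 1) + f i * q ^ i) * G q K i := by
  have h : ∑ i ∈ range (K + 2), f i * q ^ i * G q K i =
      ∑ i ∈ range (K + 1), f i * q ^ i * G q K i := by
    rw [sum_range_succ, G_lt q K (K + 1) (by omega)]; simp
  rw [sum_range_succ'] at h ⊢
  simp only [G_succ, G_zero, add_mul, sum_add_distrib, mul_add] at *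
  rw [← h]
  simp only [mul_assoc, pow_zero, mul_one]
  ring

lemma sum2 (q : R) (f : ℕ → R) (K : ℕ) :
    ∑ i ∈ range (K + 2), f i * G q (K + 1) i =
      ∑ i ∈ range (K + 1), (f i + f (i + 1) * q ^ (K - i)) * G q K i := by
  have h : ∑ i ∈ range (K + 2), f i * G q K i =
      ∑ i ∈ range (K + 1), f i * G q K i := by
    rw [sum_range_succ, G_lt q K (K + 1) (by omega)]; simp
  rw [sum_range_succ'] at h ⊢
  have h2 : ∑ k ∈ range (K + 1), f (k + 1) * G q (K + 1) (k + 1) =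
      ∑ k ∈ range (K + 1), f (k + 1) * (G q K (k + 1) + q ^ (K - k) * G q K k) :=
    sum_congr rfl fun k hk => by rw [G_succ2 q K k (by simp at hk; omega)]
  rw [h2]
  simp only [G_zero, add_mul, sum_add_distrib, mul_add] at *
  rw [← h]
  simp only [mul_assoc, mul_one]
  ring

lemma w_nat (u v q : R) (k : ℕ) : w u v q (k : ℤ) = (-u) ^ k * q ^ (k.choose 2) := rfl

lemma w_neg (u v q : R) (k : ℕ) : w u v q (-(k : ℤ)) = (-v) ^ k * q ^ (k.choose 2) := by
  cases k with
  | zero => 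
    change w u v q ((0 : ℕ) : ℤ) = _
    rw [w_nat]; simp
  | succ k => rfl

lemma w_zero (u v q : R) : w u v q 0 = 1 := by
  change w u v q ((0 : ℕ) : ℤ) = _
  rw [w_nat]; simp

lemma ch (k : ℕ) : (k + 1).choose 2 = k + k.choose 2 := by
  rw [Nat.choose_succ_succ' k 1]; simp

lemma wA (u v q : R) (h : u * v = q) (m i : ℕ) :
    w u v q ((i : ℤ) - (m + 1 : ℕ)) * q ^ i = -v * q ^ m * w u v q ((i : ℤ) - m) := by
  rcases Nat.lt_or_ge m i with hm | hm
  · obtain ⟨d, rfl⟩ : ∃ d, i = m + 1 + d := ⟨i - m - 1, by omega⟩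
    rw [show ((m + 1 + d : ℕ) : ℤ) - (m + 1 : ℕ) = (d : ℕ) by push_cast; ring,
      show ((m + 1 + d : ℕ) : ℤ) - m = (d + 1 : ℕ) by push_cast; ring, w_nat, w_nat, ch, ← h]
    ring
  · obtain ⟨d, rfl⟩ : ∃ d, m = i + d := ⟨m - i, by omega⟩
    rw [show (i : ℤ) - (i + d + 1 : ℕ) = -((d + 1 : ℕ) : ℤ) by push_cast; ring,
      show (i : ℤ) - (i + d : ℕ) = -(d : ℤ) by push_cast; ring, w_neg, w_neg, ch]
    ring

lemma wB (u v q : R) (h : u * v = q) (m n i : ℕ) (hi : i ≤ m + n) :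
    w u v q (((i + 1 : ℕ) : ℤ) - m) * q ^ (m + n - i) = -u * q ^ n * w u v q ((i : ℤ) - m) := by
  rcases Nat.lt_or_ge i m with hm | hm
  · obtain ⟨d, rfl⟩ : ∃ d, m = i + 1 + d := ⟨m - i - 1, by omega⟩
    rw [show ((i + 1 : ℕ) : ℤ) - (i + 1 + d : ℕ) = -((d : ℕ) : ℤ) by push_cast; ring,
      show (i : ℤ) - (i + 1 + d : ℕ) = -((d + 1 : ℕ) : ℤ) by push_cast; ring, w_neg, w_neg, ch,
      show i + 1 + d + n - i = d + n + 1 by omega, ← h]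
    ring
  · obtain ⟨d, rfl⟩ : ∃ d, i = m + d := ⟨i - m, by omega⟩
    obtain ⟨c, rfl⟩ : ∃ c, n = d + c := ⟨n - d, by omega⟩
    rw [show ((m + d + 1 : ℕ) : ℤ) - m = (d + 1 : ℕ) by push_cast; ring,
      show ((m + d : ℕ) : ℤ) - m = (d : ℕ) by push_cast; ring, w_nat, w_nat, ch,
      show m + (d + c) - (m + d) = c by omega]
    ring

/-- finite Jacobi triple product -/
lemma jtp (u v q : R) (h : u * v = q) (m n : ℕ) :
    ∑ i ∈ range (m + n + 1), w u v q ((i : ℤ) - m) * G q (m + n) i =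
      (∏ i ∈ range n, (1 - u * q ^ i)) * ∏ i ∈ range m, (1 - v * q ^ i) := by
  induction m with
  | zero =>
    induction n with
    | zero => simp [G, w_zero]
    | succ n ih =>
      rw [show 0 + (n + 1) + 1 = n + 2 by ring, show 0 + (n + 1) = n + 1 by ring,
        sum2 q (fun i : ℕ => w u v q ((i : ℤ) - (0 : ℕ))), prod_range_succ]
      rw [show 0 + n = n by ring] at ih
      have : ∑ i ∈ range (n + 1), (w u v q ((i : ℤ) - (0 : ℕ)) +
          w u v q (((i + 1 : ℕ) : ℤ) - (0 : ℕ)) * q ^ (n - i)) * G q n i =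
          ∑ i ∈ range (n + 1), (1 - u * q ^ n) * (w u v q ((i : ℤ) - (0 : ℕ)) * G q n i) := by
        refine sum_congr rfl fun i hi => ?_
        have := wB u v q h 0 n i (by simp at hi; omega)
        rw [zero_add] at this
        rw [this]; ring
      rw [this, ← mul_sum, ih]; ring
  | succ m ih =>
    rw [show m + 1 + n + 1 = (m + n) + 2 by ring, show m + 1 + n = m + n + 1 by ring,
      sum1 q (fun i : ℕ => w u v q ((i : ℤ) - (m + 1 : ℕ))), prod_range_succ, ← mul_assoc, ← ih,
      sum_mul]
    refine sum_congr rfl fun i hi => ?_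
    rw [wA u v q h, show ((i + 1 : ℕ) : ℤ) - (m + 1 : ℕ) = (i : ℤ) - m by push_cast; ring]
    ring

section e
variable {q : R} {e : ℕ → R} (he : ∀ n, e n * P q n = 1)
include he

lemma e_zero : e 0 = 1 := by simpa [P] using he 0

lemma e_succ (n : ℕ) : e n = (1 - q ^ (n + 1)) * e (n + 1) := by
  have h1 := he n
  have h2 := he (n + 1)
  rw [P_succ] at h2
  linear_combination (-e n) * h2 + (1 - q ^ (n + 1)) * e (n + 1) * h1

lemma G_e (a b : ℕ) : G q (a + b) a = P q (a + b) * (e a * e b) := by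
  have h := G_fac q (a + b) a b rfl
  have h1 := he a
  have h2 := he b
  linear_combination (e a * e b) * h - G q (a + b) a * (e b * P q b) * h1 - G q (a + b) a * h2

lemma vand (L : ℕ) : ∀ a : ℕ,
    ∑ t ∈ range (L + 1), q ^ (t * (t + a)) * e (t + a) * G q L t = e (L + a) := by
  induction L with
  | zero => intro a; simp [G]
  | succ L ih =>
    intro a
    rw [sum1 q (fun t => q ^ (t * (t + a)) * e (t + a)), show L + 1 + a = L + (a + 1) by ring,
      ← ih (a + 1)]
    refine sum_congr rfl fun t ht => ?_
    rw [e_succ he (t + a), show t + 1 + a = t + a + 1 by ring, show t + (a + 1) = t + a + 1 by ring]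
    ring

lemma vand' (L a : ℕ) :
    ∑ t ∈ range (L + 1), q ^ (t * (t + a)) * e (L - t) * e t * e (t + a) = e L * e (L + a) := by
  rw [← vand he L a, mul_sum]
  refine sum_congr rfl fun t ht => ?_
  obtain ⟨b, rfl⟩ : ∃ b, L = t + b := ⟨L - t, by simp at ht; omega⟩
  rw [G_e he, Nat.add_sub_cancel_left]
  linear_combination -(q ^ (t * (t + a)) * e b * e t * e (t + a)) * he (t + b)

lemma bailey (α : ℕ → R) (a N : ℕ) :
    ∑ s ∈ range (N + 1), q ^ (s ^ 2 + a * s) * e (N - s) *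
      (∑ l ∈ range (s + 1), α l * e (s - l) * e (s + l + a)) =
    ∑ l ∈ range (N + 1), q ^ (l ^ 2 + a * l) * α l * e (N - l) * e (N + l + a) := by
  simp only [mul_sum]
  rw [sum_comm' (t' := range (N + 1)) (s' := fun l => Ico l (N + 1))
    (by intro x y; simp; omega)]
  refine sum_congr rfl fun l hl => ?_
  have hl : l ≤ N := by simp at hl; omega
  obtain ⟨L, rfl⟩ : ∃ L, N = l + L := ⟨N - l, by omega⟩
  rw [sum_Ico_eq_sum_range, show l + L + 1 - l = L + 1 by omega, show l + L - l = L by omega]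
  have := vand' he L (2 * l + a)
  rw [show l + L + l + a = L + (2 * l + a) by ring, mul_assoc, ← this, mul_sum]
  refine sum_congr rfl fun t ht => ?_
  rw [show l + L - (l + t) = L - t by omega, show l + t - l = t by omega,
    show l + t + l + a = t + (2 * l + a) by ring]
  ring

end e

lemma fold (F : ℤ → R) (m n : ℕ) :
    ∑ i ∈ range (m + n + 1), F ((i : ℤ) - m) =
      ∑ l ∈ range (n + 1), F l + ∑ k ∈ range m, F (-((k + 1 : ℕ) : ℤ)) := by
  rw [add_assoc, sum_range_add, ← sum_range_reflect, add_comm]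
  congr 1
  · refine sum_congr rfl fun i _ => by congr 1; push_cast; ring
  · refine sum_congr rfl fun i hi => ?_
    simp at hi
    congr 1
    omega


lemma P_stab {q : R} {M : ℕ} (hq : q ^ M = 0) (n : ℕ) (h : M ≤ n) : P q n = P q M := by
  induction n, h using Nat.le_induction with
  | base => rfl
  | succ n hn ih =>
    rw [P_succ, ih, pow_eq_zero_of_le (by omega : M ≤ n + 1) hq]; simp

section unit
variable {q : R} {e : ℕ → R} (he : ∀ n, e n * P q n = 1)
include he

lemma e_stab {M : ℕ} (hq : q ^ M = 0) (n : ℕ) (h : M ≤ n) : e n = e M := by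
  have h1 := he n
  have h2 := he M
  rw [P_stab hq n h] at h1
  linear_combination e M * h1 - e n * h2

lemma jtp_e (u v : R) (h : u * v = q) (m n : ℕ) :
    ∑ i ∈ range (m + n + 1), w u v q ((i : ℤ) - m) * (e i * e (m + n - i)) =
      e (m + n) * ((∏ i ∈ range n, (1 - u * q ^ i)) * ∏ i ∈ range m, (1 - v * q ^ i)) := by
  rw [← jtp u v q h, mul_sum]
  refine sum_congr rfl fun i hi => ?_
  obtain ⟨b, hb⟩ : ∃ b, m + n = i + b := ⟨m + n - i, by simp at hi; omega⟩
  rw [hb, G_e he, Nat.add_sub_cancel_left]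
  linear_combination (-w u v q ((i : ℤ) - m) * (e i * e b)) * he (i + b)

lemma unit0 (s : ℕ) :
    ∑ l ∈ range (s + 1), (w 1 q q l + if l = 0 then 0 else w 1 q q (-(l : ℤ))) *
      e (s - l) * e (s + l + 0) = if s = 0 then 1 else 0 := by
  have h := jtp_e he 1 q (one_mul q) s s
  have hf := fold (fun j => w 1 q q j * (e (s + j).toNat * e (s - j).toNat)) s s
  have e1 : ∑ i ∈ range (s + s + 1), w 1 q q ((i : ℤ) - s) * (e i * e (s + s - i)) =
      ∑ i ∈ range (s + s + 1), w 1 q q ((i : ℤ) - s) *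
        (e (s + ((i : ℤ) - s)).toNat * e (s - ((i : ℤ) - s)).toNat) := by
    refine sum_congr rfl fun i hi => ?_
    simp at hi
    congr 3 <;> omega
  have e2 : e (s + s) * ((∏ i ∈ range s, (1 - 1 * q ^ i)) * ∏ i ∈ range s, (1 - q * q ^ i)) =
      if s = 0 then 1 else 0 := by
    cases s with
    | zero => simp [e_zero he]
    | succ s => rw [prod_range_succ']; simp
  rw [← e2, ← h, e1, hf]
  simp only [add_mul, sum_add_distrib]
  congr 1
  · refine sum_congr rfl fun i hi => ?_
    simp at hi
    rw [mul_assoc, mul_comm (e (s - i))]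
    congr 3; omega
  · rw [sum_range_succ']
    simp only [if_true, Nat.succ_ne_zero, if_false, zero_mul, add_zero]
    refine sum_congr rfl fun i hi => ?_
    simp at hi
    rw [mul_assoc]
    congr 3 <;> omega

lemma unit1 (s : ℕ) :
    ∑ l ∈ range (s + 1), (w 1 q q l + w 1 q q (-((l + 1 : ℕ) : ℤ))) *
      e (s - l) * e (s + l + 1) = if s = 0 then 1 else 0 := by
  have h := jtp_e he 1 q (one_mul q) (s + 1) s
  have hf := fold (fun j => w 1 q q j * (e (s + 1 + j).toNat * e (s - j).toNat)) (s + 1) s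
  have e1 : ∑ i ∈ range (s + 1 + s + 1), w 1 q q ((i : ℤ) - (s + 1 : ℕ)) * (e i * e (s + 1 + s - i)) =
      ∑ i ∈ range (s + 1 + s + 1), w 1 q q ((i : ℤ) - (s + 1 : ℕ)) *
        (e (s + 1 + ((i : ℤ) - (s + 1 : ℕ))).toNat * e (s - ((i : ℤ) - (s + 1 : ℕ))).toNat) := by
    refine sum_congr rfl fun i hi => ?_
    simp at hi
    congr 3 <;> omega
  have e2 : e (s + 1 + s) * ((∏ i ∈ range s, (1 - 1 * q ^ i)) *
      ∏ i ∈ range (s + 1), (1 - q * q ^ i)) = if s = 0 then 1 else 0 := by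
    cases s with
    | zero => simpa [P] using he 1
    | succ s => rw [prod_range_succ' _ s]; simp
  rw [← e2, ← h, e1, hf]
  simp only [add_mul, sum_add_distrib]
  congr 1
  · refine sum_congr rfl fun i hi => ?_
    simp at hi
    rw [mul_assoc, mul_comm (e (s - i))]
    congr 3 <;> omega
  · refine sum_congr rfl fun i hi => ?_
    simp at hi
    rw [mul_assoc]
    congr 3 <;> omega

lemma chain {M : ℕ} (hq : q ^ M = 0) (α : ℕ → R) (a : ℕ)
    (hα : ∀ s, ∑ l ∈ range (s + 1), α l * e (s - l) * e (s + l + a) = if s = 0 then 1 else 0) :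
    ∑ s ∈ range (2 * M + 1), q ^ (s ^ 2 + a * s) * e s =
      e M * ∑ l ∈ range (2 * M + 1), q ^ (2 * (l ^ 2 + a * l)) * α l := by
  have b1 : ∀ N, ∑ l ∈ range (N + 1), (q ^ (l ^ 2 + a * l) * α l) * e (N - l) * e (N + l + a) =
      e N := by
    intro N
    rw [← bailey he α a N]
    simp only [hα]
    rw [sum_range_succ']
    simp
  have b2 := bailey he (fun l => q ^ (l ^ 2 + a * l) * α l) a (2 * M)
  simp only [b1] at b2
  have key : ∀ s : ℕ, s ≤ 2 * M → q ^ (s ^ 2 + a * s) * e (2 * M - s) = q ^ (s ^ 2 + a * s) * e M := by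
    intro s hs
    rcases Nat.lt_or_ge s M with h | h
    · rw [e_stab he hq (2 * M - s) (by omega)]
    · rw [pow_eq_zero_of_le (by nlinarith : M ≤ s ^ 2 + a * s) hq]; simp
  have l1 : ∑ s ∈ range (2 * M + 1), q ^ (s ^ 2 + a * s) * e (2 * M - s) * e s =
      e M * ∑ s ∈ range (2 * M + 1), q ^ (s ^ 2 + a * s) * e s := by
    rw [mul_sum]
    refine sum_congr rfl fun s hs => ?_
    rw [key s (by simp at hs; omega)]; ring
  have l2 : ∑ l ∈ range (2 * M + 1), q ^ (l ^ 2 + a * l) * (q ^ (l ^ 2 + a * l) * α l) *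
      e (2 * M - l) * e (2 * M + l + a) =
      e M * (e M * ∑ l ∈ range (2 * M + 1), q ^ (2 * (l ^ 2 + a * l)) * α l) := by
    rw [mul_sum, mul_sum]
    refine sum_congr rfl fun s hs => ?_
    rw [e_stab he hq (2 * M + s + a) (by omega)]
    have := key s (by simp at hs; omega)
    linear_combination q ^ (s ^ 2 + a * s) * α s * e M * this
  rw [l1, l2] at b2
  have := he M
  linear_combination P q M * b2 + (-(∑ s ∈ range (2 * M + 1), q ^ (s ^ 2 + a * s) * e s) + e M * ∑ l ∈ range (2 * M + 1), q ^ (2 * (l ^ 2 + a * l)) * α l) * this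

lemma w_nil {M : ℕ} (u v : R) (hu : u ^ M = 0) (hv : v ^ M = 0) (j : ℤ) (hj : M ≤ j.natAbs) :
    w u v q j = 0 := by
  rcases Int.natAbs_eq j with h | h
  · rw [h, w_nat, neg_pow, pow_eq_zero_of_le hj hu]; simp
  · rw [h, w_neg, neg_pow, pow_eq_zero_of_le hj hv]; simp

lemma jtp_inf {M : ℕ} (hq : q ^ M = 0) (u v : R) (hu : u ^ M = 0) (hv : v ^ M = 0)
    (h : u * v = q) (m n : ℕ) (hm : 2 * M ≤ m) (hn : 2 * M ≤ n) :
    ∑ i ∈ range (m + n + 1), w u v q ((i : ℤ) - m) =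
      P q M * ((∏ i ∈ range n, (1 - u * q ^ i)) * ∏ i ∈ range m, (1 - v * q ^ i)) := by
  have hh := jtp_e he u v h m n
  have : ∑ i ∈ range (m + n + 1), w u v q ((i : ℤ) - m) * (e i * e (m + n - i)) =
      (e M * e M) * ∑ i ∈ range (m + n + 1), w u v q ((i : ℤ) - m) := by
    rw [mul_sum]
    refine sum_congr rfl fun i hi => ?_
    simp at hi
    by_cases hj : M ≤ ((i : ℤ) - m).natAbs
    · rw [w_nil he u v hu hv _ hj]; simp
    · rw [e_stab he hq i (by omega), e_stab he hq (m + n - i) (by omega)]; ring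
  rw [this, e_stab he hq (m + n) (by omega)] at hh
  have h1 := he M
  generalize ∑ i ∈ range (m + n + 1), w u v q ((i : ℤ) - m) = S at *
  generalize ((∏ i ∈ range n, (1 - u * q ^ i)) * ∏ i ∈ range m, (1 - v * q ^ i)) = T at *
  linear_combination P q M ^ 2 * hh + (P q M * T - S * (e M * P q M + 1)) * h1

end unit

lemma P_five (q : R) (N : ℕ) : P q (5 * N) =
    (∏ i ∈ range N, (1 - q ^ (5 * i + 1)) * (1 - q ^ (5 * i + 4))) *
    (∏ i ∈ range N, (1 - q ^ (5 * i + 2)) * (1 - q ^ (5 * i + 3))) * P (q ^ 5) N := by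
  induction N with
  | zero => simp [P]
  | succ N ih =>
    rw [show 5 * (N + 1) = 5 * N + 1 + 1 + 1 + 1 + 1 by ring]
    simp only [P_succ, prod_range_succ, ih]
    ring

lemma P_unit_exists (q : R) (M : ℕ) (hq : q ^ M = 0) : ∃ e : ℕ → R, ∀ n, e n * P q n = 1 := by
  have : ∀ n, IsUnit (P q n) := by
    intro n
    induction n with
    | zero => simp [P]
    | succ n ih =>
      rw [P_succ]
      refine ih.mul (IsNilpotent.isUnit_one_sub ⟨M, ?_⟩)
      rw [← pow_mul, mul_comm, pow_mul, hq, zero_pow (by simp)]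
  choose f hf using fun n => (this n).exists_left_inv
  exact ⟨f, hf⟩

lemma two_ch (l : ℕ) : 2 * l.choose 2 + l = l ^ 2 := by
  induction l with
  | zero => rfl
  | succ l ih => rw [ch]; nlinarith

lemma pnil {q : R} {M : ℕ} (hq : q ^ M = 0) (k : ℕ) (hk : k ≠ 0) : (q ^ k) ^ M = 0 := by
  rw [← pow_mul, mul_comm, pow_mul, hq, zero_pow hk]

lemma cancel {S A B C e p : R} (h : S = e * (C * B)) (hp : p = A * B * C) (he : e * p = 1) :
    S * A = 1 := by
  rw [h, ← he, hp]; ring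

theorem rr1 {q : R} {M : ℕ} (hq : q ^ M = 0) {e : ℕ → R} (he : ∀ n, e n * P q n = 1) :
    (∑ s ∈ range (2 * M + 1), q ^ (s ^ 2) * e s) *
      (∏ i ∈ range (2 * M), (1 - q ^ (5 * i + 1)) * (1 - q ^ (5 * i + 4))) = 1 := by
  obtain ⟨E, hE⟩ := P_unit_exists (q ^ 5) M (pnil hq 5 (by simp))
  have h1 := chain he hq _ 0 (unit0 he)
  have h2 := jtp_inf hE (pnil hq 5 (by simp)) (q ^ 2) (q ^ 3) (pnil hq 2 (by simp))
    (pnil hq 3 (by simp)) (by ring) (2 * M) (2 * M) le_rfl le_rfl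
  rw [fold (w (q ^ 2) (q ^ 3) (q ^ 5))] at h2
  have h3 : ∑ l ∈ range (2 * M + 1), q ^ (2 * (l ^ 2 + 0 * l)) *
      (w 1 q q l + if l = 0 then 0 else w 1 q q (-(l : ℤ))) =
      ∑ l ∈ range (2 * M + 1), w (q ^ 2) (q ^ 3) (q ^ 5) l +
      ∑ k ∈ range (2 * M), w (q ^ 2) (q ^ 3) (q ^ 5) (-((k + 1 : ℕ) : ℤ)) := by
    simp only [mul_add, sum_add_distrib]
    congr 1
    · refine sum_congr rfl fun l _ => ?_
      rw [w_nat, w_nat, ← two_ch l, neg_pow, neg_pow (q ^ 2)]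
      ring
    · rw [sum_range_succ']
      simp only [if_true, Nat.succ_ne_zero, if_false, mul_zero, add_zero]
      refine sum_congr rfl fun l _ => ?_
      rw [w_neg, w_neg, ← two_ch (l + 1), neg_pow, neg_pow (q ^ 3)]
      ring
  rw [h3, h2] at h1
  simp only [zero_mul, add_zero] at h1
  refine cancel h1 (p := P q M) ?_ (he M)
  rw [← P_stab hq (5 * (2 * M)) (by omega), P_five, P_stab (pnil hq 5 (by simp)) (2 * M) (by omega)]
  have hk : ∀ k i : ℕ, q ^ k * (q ^ 5) ^ i = q ^ (5 * i + k) := by intros; ring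
  simp only [hk, prod_mul_distrib]

theorem rr2 {q : R} {M : ℕ} (hq : q ^ M = 0) {e : ℕ → R} (he : ∀ n, e n * P q n = 1) :
    (∑ s ∈ range (2 * M + 1), q ^ (s ^ 2 + s) * e s) *
      (∏ i ∈ range (2 * M), (1 - q ^ (5 * i + 2)) * (1 - q ^ (5 * i + 3))) = 1 := by
  obtain ⟨E, hE⟩ := P_unit_exists (q ^ 5) M (pnil hq 5 (by simp))
  have h1 := chain he hq _ 1 (unit1 he)
  have h2 := jtp_inf hE (pnil hq 5 (by simp)) (q ^ 4) q (pnil hq 4 (by simp))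
    hq (by ring) (2 * M + 1) (2 * M) (by omega) le_rfl
  rw [fold (w (q ^ 4) q (q ^ 5))] at h2
  have h3 : ∑ l ∈ range (2 * M + 1), q ^ (2 * (l ^ 2 + 1 * l)) *
      (w 1 q q l + w 1 q q (-((l + 1 : ℕ) : ℤ))) =
      ∑ l ∈ range (2 * M + 1), w (q ^ 4) q (q ^ 5) l +
      ∑ k ∈ range (2 * M + 1), w (q ^ 4) q (q ^ 5) (-((k + 1 : ℕ) : ℤ)) := by
    simp only [mul_add, sum_add_distrib]
    congr 1
    · refine sum_congr rfl fun l _ => ?_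
      rw [w_nat, w_nat, ← two_ch l, neg_pow, neg_pow (q ^ 4)]
      ring
    · refine sum_congr rfl fun l _ => ?_
      rw [w_neg, w_neg, ch, ← two_ch l, neg_pow]
      ring
  rw [h3, h2] at h1
  simp only [one_mul] at h1
  refine cancel h1 (p := P q M) ?_ (he M)
  rw [← P_stab hq (5 * (2 * M)) (by omega), P_five, P_stab (pnil hq 5 (by simp)) (2 * M) (by omega),
    prod_range_succ, ← pow_mul, ← pow_succ', pow_eq_zero_of_le (by omega : M ≤ 5 * (2 * M) + 1) hq,
    sub_zero, mul_one]
  have hk : ∀ k i : ℕ, q ^ k * (q ^ 5) ^ i = q ^ (5 * i + k) := by intros; ring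
  have hk1 : ∀ i : ℕ, q * (q ^ 5) ^ i = q ^ (5 * i + 1) := by intros; ring
  simp only [hk, hk1, prod_mul_distrib]
  ring

open PowerSeries in
lemma genf (p : ℕ → Prop) [DecidablePred p] (K : ℕ) :
    (PowerSeries.mk fun n => ((Nat.Partition.restricted n (fun x => x ≤ K ∧ p x)).card : ℤ)) *
      ∏ i ∈ range K, (if p (i + 1) then 1 - (X : ℤ⟦X⟧) ^ (i + 1) else 1) = 1 := by
  open scoped PowerSeries.WithPiTopology in
  have h := Nat.Partition.hasProd_powerSeriesMk_card_restricted ℤ (fun x => x ≤ K ∧ p x)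
  have h2 : HasProd
    (fun i => if i + 1 ≤ K ∧ p (i + 1) then ∑' j : ℕ, (X : ℤ⟦X⟧) ^ ((i + 1) * j) else 1)
    (∏ i ∈ range K,
      if i + 1 ≤ K ∧ p (i + 1) then ∑' j : ℕ, (X : ℤ⟦X⟧) ^ ((i + 1) * j) else 1) := by
      apply hasProd_prod_of_ne_finset_one
      intro b hb
      simp at hb
      rw [if_neg (by omega)]
  rw [h.unique h2, ← prod_mul_distrib]
  refine prod_eq_one fun i hi => ?_
  simp at hi
  by_cases hp : p (i + 1)
  · rw [if_pos ⟨by omega, hp⟩, if_pos hp]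
    simp_rw [pow_mul]
    rw [PowerSeries.WithPiTopology.tsum_pow_mul_one_sub_of_constantCoeff_eq_zero (by simp)]
  · rw [if_neg (by tauto), if_neg hp]; simp

open PowerSeries in
lemma prod14 (N : ℕ) :
    ∏ i ∈ range (5 * N), (if (i + 1) % 5 = 1 ∨ (i + 1) % 5 = 4 then 1 - (X : ℤ⟦X⟧) ^ (i + 1) else 1) =
    ∏ i ∈ range N, (1 - X ^ (5 * i + 1)) * (1 - X ^ (5 * i + 4)) := by
  induction N with
  | zero => simp
  | succ N ih =>
    rw [show 5 * (N + 1) = 5 * N + 1 + 1 + 1 + 1 + 1 by ring]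
    simp only [prod_range_succ, ih]
    rw [if_pos (by omega), if_neg (by omega), if_neg (by omega), if_pos (by omega),
      if_neg (by omega)]
    ring

open PowerSeries in
lemma prod23 (N : ℕ) :
    ∏ i ∈ range (5 * N), (if (i + 1) % 5 = 2 ∨ (i + 1) % 5 = 3 then 1 - (X : ℤ⟦X⟧) ^ (i + 1) else 1) =
    ∏ i ∈ range N, (1 - X ^ (5 * i + 2)) * (1 - X ^ (5 * i + 3)) := by
  induction N with
  | zero => simp
  | succ N ih =>
    rw [show 5 * (N + 1) = 5 * N + 1 + 1 + 1 + 1 + 1 by ring]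
    simp only [prod_range_succ, ih]
    rw [if_neg (by omega), if_pos (by omega), if_pos (by omega), if_neg (by omega),
      if_neg (by omega)]
    ring

lemma restr (n K : ℕ) (h : n ≤ K) (p : ℕ → Prop) [DecidablePred p] :
    (Nat.Partition.restricted n (fun x => x ≤ K ∧ p x)) =
    Finset.univ.filter (fun c : Nat.Partition n => ∀ x ∈ c.parts, p x) := by
  ext c
  simp only [Nat.Partition.restricted, mem_filter, mem_univ, true_and]
  refine forall₂_congr fun x hx => ?_
  have := Multiset.le_sum_of_mem hx
  rw [c.parts_sum] at this
  exact ⟨fun h => h.2, fun hp => ⟨by omega, hp⟩⟩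

end RR

open PowerSeries Finset RR in
theorem RR.main (n : ℕ) :
    ((Finset.univ.filter (fun p : Nat.Partition n =>
        ∀ x ∈ p.parts, x % 5 = 1 ∨ x % 5 = 4)).card : ℤ) -
    ((Finset.univ.filter (fun p : Nat.Partition n =>
        ∀ x ∈ p.parts, x % 5 = 2 ∨ x % 5 = 3)).card : ℤ) =
    ∑ k ∈ (Finset.Icc 1 n).filter (fun k => k ^ 2 ≤ n),
      ((Finset.univ.filter (fun p : Nat.Partition (n - k ^ 2) =>
          ∀ x ∈ p.parts, x ≤ k - 1)).card : ℤ) := by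
  obtain ⟨M, hM⟩ : ∃ M, M = n + 1 := ⟨_, rfl⟩
  let f := Ideal.Quotient.mk (Ideal.span {(X : ℤ⟦X⟧) ^ M})
  have hq : (f X) ^ M = 0 := by
    rw [← map_pow]
    exact Ideal.Quotient.eq_zero_iff_mem.2 (Ideal.mem_span_singleton_self _)
  obtain ⟨e, hedef⟩ : ∃ e : ℕ → ℤ⟦X⟧, ∀ s, e s = PowerSeries.mk fun n =>
    ((Nat.Partition.restricted n (fun x => x ≤ s ∧ True)).card : ℤ) := ⟨_, fun _ => rfl⟩
  have he : ∀ s, e s * P X s = 1 := by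
    intro s
    have := genf (fun _ => True) s
    rw [hedef]
    simpa [P] using this
  have he' : ∀ s, f (e s) * P (f X) s = 1 := by
    intro s
    rw [← map_one f, ← he s]
    simp [P]
  have A1 := genf (fun x => x % 5 = 1 ∨ x % 5 = 4) (5 * (2 * M))
  have A2 := genf (fun x => x % 5 = 2 ∨ x % 5 = 3) (5 * (2 * M))
  rw [prod14] at A1
  rw [prod23] at A2
  have B1 := rr1 hq he'
  have B2 := rr2 hq he'
  replace A1 := congrArg f A1
  replace A2 := congrArg f A2
  have C1 : ∏ i ∈ range (2 * M), (1 - f X ^ (5 * i + 1)) * (1 - f X ^ (5 * i + 4)) =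
    f (∏ i ∈ range (2 * M), (1 - X ^ (5 * i + 1)) * (1 - X ^ (5 * i + 4))) := by simp
  have C2 : ∏ i ∈ range (2 * M), (1 - f X ^ (5 * i + 2)) * (1 - f X ^ (5 * i + 3)) =
    f (∏ i ∈ range (2 * M), (1 - X ^ (5 * i + 2)) * (1 - X ^ (5 * i + 3))) := by simp
  rw [map_mul, ← C1, map_one] at A1
  rw [map_mul, ← C2, map_one] at A2
  have D1 := left_inv_eq_right_inv A1 (mul_comm _ _ |>.trans B1)
  have D2 := left_inv_eq_right_inv A2 (mul_comm _ _ |>.trans B2)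
  have S : ∑ s ∈ range (2 * M + 1), f X ^ s ^ 2 * f (e s) -
      ∑ s ∈ range (2 * M + 1), f X ^ (s ^ 2 + s) * f (e s) =
      f (∑ k ∈ range (2 * M), X ^ ((k + 1) ^ 2) * e k) := by
    rw [← sum_sub_distrib, sum_range_succ', map_sum]
    simp only [ne_eq, OfNat.ofNat_ne_zero, not_false_eq_true, zero_pow, pow_zero, add_zero, sub_self]
    refine sum_congr rfl fun k _ => ?_
    rw [e_succ he k]
    simp only [map_mul, map_pow, map_sub, map_one]
    ring
  rw [← D1, ← D2, ← map_sub] at S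
  have T := Ideal.mem_span_singleton.1 (Ideal.Quotient.eq.1 S)
  have U := X_pow_dvd_iff.1 T n (by omega)
  rw [map_sub, map_sub, coeff_mk, coeff_mk, restr _ _ (by omega), restr _ _ (by omega),
    sub_eq_zero] at U
  rw [U, map_sum, sum_filter]
  have hI : Finset.Icc 1 n = (range n).map (addRightEmbedding 1) := by
    ext x; simp only [mem_Icc, mem_map, mem_range, addRightEmbedding_apply]
    constructor
    · intro h; exact ⟨x - 1, by omega, by omega⟩
    · rintro ⟨y, h, rfl⟩; omega
  rw [hI, sum_map]
  symm
  rw [sum_subset (range_subset_range.2 (by omega : n ≤ 2 * M))]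
  · refine sum_congr rfl fun k _ => ?_
    rw [coeff_X_pow_mul', hedef, coeff_mk]
    simp [Nat.Partition.restricted]
    rfl
  · intro k _ hk
    simp at hk
    simp only [addRightEmbedding_apply]
    rw [if_neg (by nlinarith)]

theorem rogers_ramanujan_difference_identity (n : ℕ) :
    ((Finset.univ.filter (fun p : Nat.Partition n =>
        ∀ x ∈ p.parts, x % 5 = 1 ∨ x % 5 = 4)).card : ℤ) -
    ((Finset.univ.filter (fun p : Nat.Partition n =>
        ∀ x ∈ p.parts, x % 5 = 2 ∨ x % 5 = 3)).card : ℤ) =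
    ∑ k ∈ (Finset.Icc 1 n).filter (fun k => k ^ 2 ≤ n),
      ((Finset.univ.filter (fun p : Nat.Partition (n - k ^ 2) =>
          ∀ x ∈ p.parts, x ≤ k - 1)).card : ℤ) := by
  exact RR.main n
end

section
/- (Berkovich–Garvan) Let L > 0 and let m, r be integers with 1 < r < m − 1. In the ring of formal power series over ℚ in one variable q, consider the difference D = (∏_{j=0}^{L−1} (1 − q^{1+jm})(1 − q^{m−1+jm}))⁻¹ − (∏_{j=0}^{L−1} (1 − q^{r+jm})(1 − q^{m−r+jm}))⁻¹. Then every coefficient of D is nonnegative if and only if r does not divide m − r and m − r does not divide r. -/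
open PowerSeries

namespace BG

def wt (L m a b : ℕ) : Fin L ⊕ Fin L → ℕ :=
  Sum.elim (fun j => a + j * m) (fun j => b + j * m)

def T {ι : Type} [Fintype ι] [DecidableEq ι] (c : ι → ℕ) (n : ℕ) : Finset (ι → ℕ) :=
  (Fintype.piFinset fun _ => Finset.range (n + 1)).filter (fun x => ∑ i, c i * x i = n)

lemma mem_T {ι : Type} [Fintype ι] [DecidableEq ι] (c : ι → ℕ) (hc : ∀ i, 0 < c i) (n : ℕ)
    (x : ι → ℕ) : x ∈ T c n ↔ ∑ i, c i * x i = n := by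
  unfold T
  rw [Finset.mem_filter, and_iff_right_iff_imp]
  intro h
  rw [Fintype.mem_piFinset]
  intro i
  rw [Finset.mem_range, Nat.lt_succ_iff, ← h]
  calc x i ≤ c i * x i := Nat.le_mul_of_pos_left _ (hc i)
    _ ≤ _ := Finset.single_le_sum (f := fun i => c i * x i) (fun _ _ => Nat.zero_le _)
        (Finset.mem_univ i)

lemma geom (c : ℕ) (hc : 0 < c) :
    (PowerSeries.mk (fun n => if c ∣ n then (1 : ℚ) else 0)) *
      (1 - (PowerSeries.X : PowerSeries ℚ) ^ c) = 1 := by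
  ext n
  rw [mul_sub, mul_one, map_sub, coeff_mul_X_pow', coeff_mk, coeff_one]
  by_cases h : c ≤ n
  · have h0 : n ≠ 0 := by omega
    simp only [h, if_true, coeff_mk, h0, if_false]
    have : c ∣ n - c ↔ c ∣ n := by
      rw [Nat.dvd_sub_iff_left h (dvd_refl c)]
    simp [this]
  · by_cases h0 : n = 0
    · subst h0; simp [hc.ne']
    · have : ¬ c ∣ n := fun hd => h (Nat.le_of_dvd (by omega) hd)
      simp [h, h0, this]

lemma coeff_inv {ι : Type} [Fintype ι] [DecidableEq ι] (c : ι → ℕ) (hc : ∀ i, 0 < c i) (n : ℕ) :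
    PowerSeries.coeff (R := ℚ) n (∏ i, (1 - (PowerSeries.X : PowerSeries ℚ) ^ (c i)))⁻¹
      = ((T c n).card : ℚ) := by
  have h1 : (∏ i, (1 - (PowerSeries.X : PowerSeries ℚ) ^ (c i)))⁻¹
      = ∏ i, PowerSeries.mk (fun n => if c i ∣ n then (1 : ℚ) else 0) := by
    symm
    rw [PowerSeries.eq_inv_iff_mul_eq_one]
    · rw [← Finset.prod_mul_distrib]
      exact Finset.prod_eq_one fun i _ => geom (c i) (hc i)
    · rw [map_prod]
      refine Finset.prod_ne_zero_iff.2 fun i _ => ?_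
      simp [(hc i).ne']
  rw [h1, PowerSeries.coeff_prod]
  simp only [coeff_mk, Finset.prod_ite_zero, Finset.prod_const_one]
  rw [Finset.sum_boole]
  congr 1
  symm
  refine Finset.card_bij (fun x _ => Finsupp.equivFunOnFinite.symm (fun i => c i * x i)) ?_ ?_ ?_
  · intro x hx
    rw [mem_T c hc] at hx
    simp [hx]
  · intro x _ y _ h
    have h := Finsupp.equivFunOnFinite.symm.injective h
    funext i
    exact Nat.eq_of_mul_eq_mul_left (hc i) (congrFun h i)
  · intro l hl
    simp only [Finset.mem_filter, Finset.mem_finsuppAntidiag, Finset.mem_univ, true_imp_iff] at hl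
    obtain ⟨⟨h, -⟩, hd⟩ := hl
    refine ⟨fun i => l i / c i, ?_, ?_⟩
    · rw [mem_T c hc, ← h]
      exact Finset.sum_congr rfl fun i _ => Nat.mul_div_cancel' (hd i)
    · ext i
      simp [Nat.mul_div_cancel' (hd i)]

lemma wt_pos (L m a b : ℕ) (ha : 0 < a) (hb : 0 < b) (i) : 0 < wt L m a b i := by
  rcases i with i | i <;> simp [wt] <;> omega

lemma coeff_wt (L m a b : ℕ) (ha : 0 < a) (hb : 0 < b) (n : ℕ) :
    PowerSeries.coeff (R := ℚ) n (∏ j ∈ Finset.range L,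
          (1 - (PowerSeries.X : PowerSeries ℚ) ^ (a + j * m)) *
          (1 - (PowerSeries.X : PowerSeries ℚ) ^ (b + j * m)))⁻¹
      = ((T (wt L m a b) n).card : ℚ) := by
  rw [← coeff_inv _ (wt_pos L m a b ha hb), Fintype.prod_sum_type, Finset.prod_mul_distrib,
    Finset.prod_range, Finset.prod_range]
  rfl

lemma wsum (L m a b : ℕ) (u v : Fin L → ℕ) :
    ∑ i, wt L m a b i * (Sum.elim u v : Fin L ⊕ Fin L → ℕ) i
      = a * (∑ j, u j) + b * (∑ j, v j) + m * ((∑ j, j.val * u j) + (∑ j, j.val * v j)) := by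
  rw [Fintype.sum_sum_type]
  simp only [wt, Sum.elim_inl, Sum.elim_inr, add_mul, Finset.sum_add_distrib, Finset.mul_sum,
    mul_add]
  have e : ∀ w : Fin L → ℕ, ∑ x : Fin L, x.val * m * w x = ∑ x : Fin L, m * (x.val * w x) :=
    fun w => Finset.sum_congr rfl fun _ _ => by ring
  rw [e, e]
  ring

section inj
variable {L : ℕ} (z : Fin L)

def addz (u : Fin L → ℕ) (k : ℕ) : Fin L → ℕ := u + Pi.single z k

lemma addz_sum (u : Fin L → ℕ) (k : ℕ) : ∑ j, addz z u k j = (∑ j, u j) + k := by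
  simp [addz, Finset.sum_add_distrib]

lemma addz_W (hz : z.val = 0) (u : Fin L → ℕ) (k : ℕ) :
    ∑ j, j.val * addz z u k j = ∑ j, j.val * u j := by
  refine Finset.sum_congr rfl fun j _ => ?_
  by_cases h : j = z
  · subst h; simp [hz]
  · simp [addz, h]

lemma addz_inj {u u' : Fin L → ℕ} {k k' : ℕ} (hk : k = k') (h : addz z u k = addz z u' k') :
    u = u' := by
  subst hk; exact add_right_cancel h

open Classical in
noncomputable def F (r s : ℕ) (x : Fin L ⊕ Fin L → ℕ) : Fin L ⊕ Fin L → ℕ :=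
  let u := x ∘ Sum.inl
  let v := x ∘ Sum.inr
  let X := ∑ j, u j
  let Y := ∑ j, v j
  if Y ≤ X then Sum.elim (addz z u ((r - 1) * (X - Y))) v
  else if r ∣ s * (Y - X) then
    Sum.elim (addz z v ((s - 1) * (Y - X) - (r + s - 1))) (addz z u 1)
  else Sum.elim (addz z v ((s - 1) * (Y - X))) u

/-- the three cases, with all data made explicit -/
lemma F_spec (r s : ℕ) (hr : 2 ≤ r) (hrs : r < s) (hd : ¬ r ∣ s) (x : Fin L ⊕ Fin L → ℕ) :
    ∃ u v : Fin L → ℕ, x = Sum.elim u v ∧ 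
    ((∃ e k, k + e = r * e ∧ ∑ j, u j = ∑ j, v j + e ∧ F z r s x = Sum.elim (addz z u k) v) ∨
     (∃ e k, k + e = s * e ∧ ∑ j, v j = ∑ j, u j + e ∧ ¬ r ∣ s * e ∧
        F z r s x = Sum.elim (addz z v k) u) ∨
     (∃ e k, k + e + (r + s) = s * e + 1 ∧ ∑ j, v j = ∑ j, u j + e ∧ r ∣ s * e ∧
        F z r s x = Sum.elim (addz z v k) (addz z u 1))) := by
  refine ⟨x ∘ Sum.inl, x ∘ Sum.inr, (Sum.elim_comp_inl_inr x).symm, ?_⟩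
  obtain ⟨r', rfl⟩ : ∃ r', r = r' + 1 := ⟨r - 1, by omega⟩
  obtain ⟨s', rfl⟩ : ∃ s', s = s' + 1 := ⟨s - 1, by omega⟩
  unfold F
  dsimp only
  split_ifs with h1 h2
  · left
    refine ⟨∑ j, (x ∘ Sum.inl) j - ∑ j, (x ∘ Sum.inr) j, _, ?_, ?_, rfl⟩
    · simp; ring
    · omega
  · right; right
    refine ⟨_, _, ?_, ?_, h2, rfl⟩
    · set e := ∑ j, (x ∘ Sum.inr) j - ∑ j, (x ∘ Sum.inl) j with he
      have he2 : 2 ≤ e := by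
        by_contra hlt
        have : e = 1 := by omega
        rw [this, mul_one] at h2
        exact hd h2
      have : s' * 2 ≤ s' * e := Nat.mul_le_mul_left _ he2
      have h3 : (s' + 1) * e = s' * e + e := by ring
      rw [h3]
      simp only [Nat.add_sub_cancel]
      omega
    · omega
  · right; left
    refine ⟨_, _, ?_, ?_, h2, rfl⟩
    · simp; ring
    · omega

lemma F_wt (hz : z.val = 0) (r s : ℕ) (hr : 2 ≤ r) (hrs : r < s) (hd : ¬ r ∣ s)
    (x : Fin L ⊕ Fin L → ℕ) :
    ∑ i, wt L (r + s) 1 (r + s - 1) i * F z r s x i = ∑ i, wt L (r + s) r s i * x i := by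
  obtain ⟨M, hM⟩ : ∃ M, r + s - 1 = M ∧ r + s = M + 1 := ⟨r + s - 1, rfl, by omega⟩
  obtain ⟨u, v, hx, h⟩ := F_spec z r s hr hrs hd x
  rw [hx] at h ⊢
  rw [wsum]
  rcases h with ⟨e, k, hk, he, hF⟩ | ⟨e, k, hk, he, -, hF⟩ | ⟨e, k, hk, he, -, hF⟩ <;>
  · rw [hF, wsum]
    simp only [addz_sum, addz_W z hz, he]
    obtain ⟨hM1, hM2⟩ := hM
    rw [hM1]
    zify at *
    have hs : (M : ℤ) = r + s - 1 := by linarith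
    rw [hs]
    linear_combination hk

lemma F_inj (r s : ℕ) (hr : 2 ≤ r) (hrs : r < s) (hd : ¬ r ∣ s) :
    Function.Injective (F z r s) := by
  have key : ∀ (A B A' B' : Fin L → ℕ), Sum.elim A B = Sum.elim A' B' → A = A' ∧ B = B' := by
    intro A B A' B' h
    exact ⟨funext fun i => congrFun h (Sum.inl i), funext fun i => congrFun h (Sum.inr i)⟩
  have hs : 2 ≤ s := by omega
  have hsr : ¬ s ∣ r := fun h => by have := Nat.le_of_dvd (by omega) h; omega
  have mulinj : ∀ t : ℕ, 2 ≤ t → ∀ e e' : ℕ, t * e = t * e' → e = e' :=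
    fun t ht e e' h => Nat.eq_of_mul_eq_mul_left (by omega) h
  intro x x' hxx
  obtain ⟨u, v, hx, h⟩ := F_spec z r s hr hrs hd x
  obtain ⟨u', v', hx', h'⟩ := F_spec z r s hr hrs hd x'
  rcases h with ⟨e, k, hk, he, hF⟩ | ⟨e, k, hk, he, hn, hF⟩ | ⟨e, k, hk, he, hn, hF⟩ <;>
  rcases h' with ⟨e', k', hk', he', hF'⟩ | ⟨e', k', hk', he', hn', hF'⟩ |
    ⟨e', k', hk', he', hn', hF'⟩ <;>
  · rw [hF, hF'] at hxx
    obtain ⟨hA, hB⟩ := key _ _ _ _ hxx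
    have hA' := congrArg (fun w => ∑ j, w j) hA
    have hB' := congrArg (fun w => ∑ j, w j) hB
    simp only [addz_sum] at hA' hB'
    first
    | (have : e = e' := by
        first
        | exact mulinj r hr _ _ (by omega)
        | exact mulinj s hs _ _ (by omega)
       have hkk : k = k' := by subst this; omega
       have h1 := addz_inj z hkk hA
       first
       | (rw [hx, hx', h1, hB]; done)
       | rw [hx, hx', h1, addz_inj z rfl hB])
    | (exfalso
       first
       | exact hn ⟨e', by omega⟩
       | exact hn' ⟨e, by omega⟩
       | (have : r * e + (r + s) = s * e' := by omega
          have h3 : r ∣ r * e + (r + s) := this ▸ hn'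
          rw [Nat.dvd_add_right (dvd_mul_right _ _), Nat.dvd_add_right (dvd_refl _)] at h3
          exact hd h3)
       | (have : r * e' + (r + s) = s * e := by omega
          have h3 : r ∣ r * e' + (r + s) := this ▸ hn
          rw [Nat.dvd_add_right (dvd_mul_right _ _), Nat.dvd_add_right (dvd_refl _)] at h3
          exact hd h3)
       | (have : s * e + (s + r) = s * e' := by omega
          have h3 : s ∣ s * e + (s + r) := this ▸ dvd_mul_right _ _
          rw [Nat.dvd_add_right (dvd_mul_right _ _), Nat.dvd_add_right (dvd_refl _)] at h3
          exact hsr h3)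
       | (have : s * e' + (s + r) = s * e := by omega
          have h3 : s ∣ s * e' + (s + r) := this ▸ dvd_mul_right _ _
          rw [Nat.dvd_add_right (dvd_mul_right _ _), Nat.dvd_add_right (dvd_refl _)] at h3
          exact hsr h3))

end inj

lemma card_le (L : ℕ) (hL : 0 < L) (r s : ℕ) (hr : 2 ≤ r) (hrs : r < s) (hd : ¬ r ∣ s) (n : ℕ) :
    (T (wt L (r + s) r s) n).card ≤ (T (wt L (r + s) 1 (r + s - 1)) n).card := by
  refine Finset.card_le_card_of_injOn (F ⟨0, hL⟩ r s) ?_ (F_inj _ r s hr hrs hd).injOn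
  intro x hx
  rw [Finset.mem_coe, mem_T _ (wt_pos _ _ _ _ (by omega) (by omega))] at hx ⊢
  rw [F_wt _ rfl r s hr hrs hd, hx]

lemma card_gt (L : ℕ) (hL : 0 < L) (r s : ℕ) (hr : 2 ≤ r) (hs : 2 ≤ s) (hd : r ∣ s) :
    (T (wt L (r + s) 1 (r + s - 1)) s).card < (T (wt L (r + s) r s) s).card := by
  have hA : (T (wt L (r + s) 1 (r + s - 1)) s).card ≤ 1 := by
    rw [Finset.card_le_one]
    have key : ∀ x ∈ T (wt L (r + s) 1 (r + s - 1)) s,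
        x = Pi.single (Sum.inl ⟨0, hL⟩) s := by
      intro x hx
      rw [mem_T _ (wt_pos _ _ _ _ (by omega) (by omega))] at hx
      have hzero : ∀ i, i ≠ Sum.inl ⟨0, hL⟩ → x i = 0 := by
        intro i hi
        by_contra h0
        have h1 : wt L (r + s) 1 (r + s - 1) i * x i ≤ s := by
          conv_rhs => rw [← hx]
          exact Finset.single_le_sum (f := fun i => wt L (r + s) 1 (r + s - 1) i * x i)
            (fun _ _ => Nat.zero_le _) (Finset.mem_univ i)
        have h2 : wt L (r + s) 1 (r + s - 1) i ≤ s :=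
          le_trans (Nat.le_mul_of_pos_right _ (Nat.pos_of_ne_zero h0)) h1
        rcases i with i | i
        · have : i.val ≠ 0 := fun h => hi (by congr 1; exact Fin.ext h)
          simp only [wt, Sum.elim_inl] at h2
          have : 1 * (r + s) ≤ i.val * (r + s) := Nat.mul_le_mul_right _ (by omega)
          omega
        · simp only [wt, Sum.elim_inr] at h2
          omega
      rw [Finset.sum_eq_single (Sum.inl ⟨0, hL⟩) (fun i _ hi => by rw [hzero i hi, mul_zero])
        (by simp)] at hx
      funext i
      by_cases hi : i = Sum.inl ⟨0, hL⟩
      · subst hi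
        simpa [wt] using hx
      · rw [hzero i hi]; simp [hi]
    intro a ha b hb
    rw [key a ha, key b hb]
  refine lt_of_le_of_lt hA ?_
  rw [Finset.one_lt_card]
  obtain ⟨k, hk⟩ := hd
  have hp := wt_pos L (r + s) r s (by omega) (by omega)
  refine ⟨Pi.single (Sum.inl ⟨0, hL⟩) k, ?_, Pi.single (Sum.inr ⟨0, hL⟩) 1, ?_, ?_⟩
  · rw [mem_T _ hp, Finset.sum_eq_single (Sum.inl ⟨0, hL⟩) (fun i _ hi => by simp [hi]) (by simp)]
    simp [wt, hk]
  · rw [mem_T _ hp, Finset.sum_eq_single (Sum.inr ⟨0, hL⟩) (fun i _ hi => by simp [hi]) (by simp)]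
    simp [wt]
  · intro h
    have := congrFun h (Sum.inr ⟨0, hL⟩)
    simp at this

lemma T_swap (L m a b n : ℕ) (ha : 0 < a) (hb : 0 < b) :
    (T (wt L m a b) n).card = (T (wt L m b a) n).card := by
  have h1 := coeff_wt L m a b ha hb n
  have h2 := coeff_wt L m b a hb ha n
  rw [← Nat.cast_inj (R := ℚ), ← h1, ← h2]
  congr 2
  exact Finset.prod_congr rfl fun _ _ => mul_comm _ _

end BG

theorem berkovich_garvan (L m r : ℕ) (hL : 0 < L) (hr : 1 < r) (hrm : r < m - 1) :
    (∀ n : ℕ, 0 ≤ PowerSeries.coeff (R := ℚ) n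
      ((∏ j ∈ Finset.range L,
          (1 - (PowerSeries.X : PowerSeries ℚ) ^ (1 + j * m)) *
          (1 - (PowerSeries.X : PowerSeries ℚ) ^ (m - 1 + j * m)))⁻¹ -
       (∏ j ∈ Finset.range L,
          (1 - (PowerSeries.X : PowerSeries ℚ) ^ (r + j * m)) *
          (1 - (PowerSeries.X : PowerSeries ℚ) ^ (m - r + j * m)))⁻¹)) ↔
    (¬ r ∣ (m - r) ∧ ¬ (m - r) ∣ r) := by
  obtain ⟨s, rfl⟩ : ∃ s, m = r + s := ⟨m - r, by omega⟩
  have hs : 2 ≤ s := by omega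
  simp only [map_sub, Nat.add_sub_cancel_left, sub_nonneg]
  simp only [BG.coeff_wt L (r + s) r s (by omega) (by omega),
    BG.coeff_wt L (r + s) 1 (r + s - 1) (by omega) (by omega), Nat.cast_le]
  constructor
  · intro h
    refine ⟨fun hd => ?_, fun hd => ?_⟩
    · exact absurd (h s) (not_le.2 (BG.card_gt L hL r s hr hs hd))
    · have := BG.card_gt L hL s r hs hr hd
      rw [BG.T_swap L _ s r _ (by omega) (by omega), add_comm s r] at this
      exact absurd (h r) (not_le.2 this)
  · rintro ⟨h1, h2⟩ n
    rcases lt_trichotomy r s with h | h | h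
    · exact BG.card_le L hL r s hr h h1 n
    · exact absurd (h ▸ dvd_refl r) h1
    · have := BG.card_le L hL s r hs h h2 n
      rw [BG.T_swap L _ s r _ (by omega) (by omega), add_comm s r] at this
      exact this
end
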